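/- arXiv:2311.00185 — 9 statements merged into one kernel-verified Lean document; each statement's English description precedes it below -/
import Mathlib

section
/- Let n ≥ 1, let P ⊆ [0,1]^n be a convex set, let j ∈ {1,…,n} and a ∈ {0,1}. Then L(P) ∩ {x : x_j = a} = L(P ∩ {x : x_j = a}). -/
open Set

def cube (n : ℕ) : Set (Fin n → ℝ) := {x | ∀ i, 0 ≤ x i ∧ x i ≤ 1}

def Lop (n : ℕ) (P : Set (Fin n → ℝ)) : Set (Fin n → ℝ) :=
  ⋂ i : Fin n, convexHull ℝ ((P ∩ {x | x i = 0}) ∪ (P ∩ {x | x i = 1}))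

/-!
Each set whose hull enters `Lop` lies in the slab `0 ≤ x j ≤ 1`, of which the hyperplane `x j = a`
is a face. Intersecting with a face commutes with taking convex hulls, because a point of the face
can only be a convex combination of points of the face. Hence it commutes with every term of the
intersection defining `Lop`, and, as this intersection is nonempty, with `Lop` itself.
-/

theorem isExtreme_affine_preimage {𝕜 E F : Type*} [Ring 𝕜] [PartialOrder 𝕜] [AddRightMono 𝕜]
    [AddCommGroup E] [Module 𝕜 E] [AddCommGroup F] [Module 𝕜 F] {A B : Set F}
    (hAB : IsExtreme 𝕜 A B) (f : E →ᵃ[𝕜] F) : IsExtreme 𝕜 (f ⁻¹' A) (f ⁻¹' B) where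
  subset := preimage_mono hAB.subset
  left_mem_of_mem_openSegment x hx y hy z hz hzxy :=
    have hfz : f z ∈ openSegment 𝕜 (f x) (f y) :=
      image_openSegment 𝕜 f x y ▸ mem_image_of_mem f hzxy
    hAB.left_mem_of_mem_openSegment hx hy hz hfz

theorem isExtreme_setOf_apply_eq {𝕜 ι : Type*} {M : ι → Type*} [Ring 𝕜] [PartialOrder 𝕜]
    [AddRightMono 𝕜] [∀ i, AddCommGroup (M i)] [∀ i, Module 𝕜 (M i)] (j : ι) {s : Set (M j)}
    {a : M j} (ha : a ∈ s.extremePoints 𝕜) :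
    IsExtreme 𝕜 {x : ∀ i, M i | x j ∈ s} {x | x j = a} :=
  isExtreme_affine_preimage (isExtreme_singleton.2 ha)
    (LinearMap.proj (R := 𝕜) (φ := M) j).toAffineMap

theorem convexHull_inter_of_isExtreme {𝕜 E : Type*} [Semiring 𝕜] [PartialOrder 𝕜]
    [ZeroLEOneClass 𝕜] [AddCommMonoid E] [Module 𝕜 E] {C F s : Set E} (hC : Convex 𝕜 C)
    (hF : Convex 𝕜 F) (hCF : IsExtreme 𝕜 C F) (hs : s ⊆ C) :
    convexHull 𝕜 s ∩ F = convexHull 𝕜 (s ∩ F) := by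
  apply Subset.antisymm
  · have hconv : Convex 𝕜 {x ∈ C | x ∈ F → x ∈ convexHull 𝕜 (s ∩ F)} := by
      refine convex_iff_openSegment_subset.2 fun x ⟨hxC, hx⟩ y ⟨hyC, hy⟩ z hz ↦
        ⟨hC.openSegment_subset hxC hyC hz, fun hzF ↦ ?_⟩
      have hxF : x ∈ F := hCF.left_mem_of_mem_openSegment hxC hyC hzF hz
      have hyF : y ∈ F := hCF.right_mem_of_mem_openSegment hxC hyC hzF hz
      exact (convex_convexHull 𝕜 _).openSegment_subset (hx hxF) (hy hyF) hz
    have hsub : s ⊆ {x ∈ C | x ∈ F → x ∈ convexHull 𝕜 (s ∩ F)} :=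
      fun x hx ↦ ⟨hs hx, fun hxF ↦ subset_convexHull 𝕜 _ ⟨hx, hxF⟩⟩
    exact fun x ⟨hx, hxF⟩ ↦ (convexHull_min hsub hconv hx).2 hxF
  · exact subset_inter (convexHull_mono inter_subset_left) (convexHull_min inter_subset_right hF)

theorem stmt0_general (n : ℕ) (hn : 1 ≤ n) {C F P : Set (Fin n → ℝ)} (hC : Convex ℝ C)
    (hF : Convex ℝ F) (hCF : IsExtreme ℝ C F) (hPC : P ⊆ C) : Lop n P ∩ F = Lop n (P ∩ F) := by
  have : Nonempty (Fin n) := Fin.pos_iff_nonempty.1 hn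
  have hterm (i : Fin n) : (P ∩ {x | x i = 0}) ∪ (P ∩ {x | x i = 1}) ⊆ C :=
    union_subset (inter_subset_left.trans hPC) (inter_subset_left.trans hPC)
  simp only [Lop, iInter_inter, convexHull_inter_of_isExtreme hC hF hCF (hterm _),
    union_inter_distrib_right, inter_right_comm P _ F]

theorem stmt0 (n : ℕ) (hn : 1 ≤ n) (P : Set (Fin n → ℝ)) (hPcube : P ⊆ cube n)
    (hPconv : Convex ℝ P) (j : Fin n) (a : ℝ) (ha : a = 0 ∨ a = 1) :
    Lop n P ∩ {x | x j = a} = Lop n (P ∩ {x | x j = a}) := by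
  have hface : IsExtreme ℝ {x : Fin n → ℝ | x j ∈ Icc 0 1} {x | x j = a} :=
    isExtreme_setOf_apply_eq j <| (extremePoints_Icc zero_le_one).symm ▸ ha
  let π : (Fin n → ℝ) →ₗ[ℝ] ℝ := LinearMap.proj j
  exact stmt0_general n hn ((convex_Icc 0 1).linear_preimage π)
    (convex_hyperplane π.isLinear a) hface fun _ hx ↦ hPcube hx j
end

section
/- Let n ≥ 1, let a ∈ ℝ^n with a ≠ 0, and let b, b' ∈ ℝ with b' > b. Let s^1, …, s^n be affinely independent points of ℝ^n satisfying a·s^i = b for all i ∈ {1,…,n}. Let R be a nonempty bounded subset of {x ∈ ℝ^n : a·x ≥ b'}. Then there exists a point x ∈ ℝ^n with a·x > b such that x ∈ conv({s^1, …, s^n, r}) for every r ∈ R. -/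
open Set

def dotp {n : ℕ} (a x : Fin n → ℝ) : ℝ := ∑ i, a i * x i

/-! Let `g` be a point of the relative interior of `conv S`, where `S` spans the hyperplane `f = b`.
Seen from a point `r` with `f r ≥ b'`, a point `x` close to `g` casts a shadow on the hyperplane,
displaced from `x` by `|f x - b| / |f r - f x| * dist r x`. As `R` is bounded and `f` stays away
from `b` on it, the shadows of `x` tend to `g` uniformly in `r ∈ R` as `x → g`. So for every `x`
near `g` on the side `f x > b`, all shadows lie in `conv S`, and `x` lies between its shadow
and `r`. -/

open Filter Topology

section CentralProjection

variable {𝕜 V : Type*} [Field 𝕜] [AddCommGroup V] [Module 𝕜 V]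

/-- The central projection of `x` from the centre `r` onto the hyperplane `{y | f y = b}`, that is,
the intersection of that hyperplane with the line through `r` and `x`. It serves to write `x` as a
convex combination of `r` and a point of the hyperplane. Division by zero makes it equal to
`r` when `f r = f x`. -/
def centralProj (f : V →ₗ[𝕜] 𝕜) (b : 𝕜) (r x : V) : V :=
  AffineMap.lineMap r x ((f r - b) / (f r - f x))

theorem map_centralProj {f : V →ₗ[𝕜] 𝕜} (b : 𝕜) {r x : V} (h : f x ≠ f r) :
    f (centralProj f b r x) = b := by
  have h' : f r - f x ≠ 0 := sub_ne_zero.2 h.symm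
  simp only [centralProj, AffineMap.lineMap_apply_module', map_add, map_smul, map_sub, smul_eq_mul]
  field_simp
  ring

theorem mem_segment_centralProj [LinearOrder 𝕜] [IsStrictOrderedRing 𝕜] {f : V →ₗ[𝕜] 𝕜} {b : 𝕜}
    {r x : V} (hb : b ≤ f x) (hr : f x < f r) : x ∈ segment 𝕜 r (centralProj f b r x) := by
  have hxr : 0 < f r - f x := sub_pos.2 hr
  have hbr : 0 < f r - b := sub_pos.2 (hb.trans_lt hr)
  rw [segment_eq_image_lineMap]
  refine ⟨(f r - f x) / (f r - b), ⟨by positivity, (div_le_one hbr).2 (by gcongr)⟩, ?_⟩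
  rw [centralProj, AffineMap.lineMap_lineMap_right, div_mul_div_cancel₀ hbr.ne', div_self hxr.ne',
    AffineMap.lineMap_apply_one]

end CentralProjection

theorem coe_affineSpan_range_eq_setOf_map_eq {k V ι : Type*} [Field k] [AddCommGroup V] [Module k V]
    [FiniteDimensional k V] [Fintype ι] {s : ι → V} (hs : AffineIndependent k s)
    (hcard : Fintype.card ι = Module.finrank k V) {f : Module.Dual k V} (hf : f ≠ 0) {b : k}
    (hsb : ∀ i, f (s i) = b) : (affineSpan k (range s) : Set V) = {x | f x = b} := by
  obtain ⟨p, rfl⟩ := LinearMap.surjective hf b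
  let H := AffineSubspace.mk' p (LinearMap.ker f)
  have mem_H (x : V) : x ∈ H ↔ f x = f p := by
    simp only [H, AffineSubspace.mem_mk', vsub_eq_sub, LinearMap.mem_ker, map_sub, sub_eq_zero]
  have span_le : affineSpan k (range s) ≤ H :=
    affineSpan_le.2 (range_subset_iff.2 fun i => (mem_H _).2 (hsb i))
  have span_eq : affineSpan k (range s) = H := by
    refine hs.affineSpan_eq_of_le_of_card_eq_finrank_add_one span_le ?_
    rw [AffineSubspace.direction_mk', hcard, Module.Dual.finrank_ker_add_one_of_ne_zero hf]
  ext x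
  rw [span_eq]
  exact mem_H x

theorem mem_intrinsicInterior_iff_mem_nhdsWithin {𝕜 V P : Type*} [Ring 𝕜] [AddCommGroup V]
    [Module 𝕜 V] [TopologicalSpace P] [AddTorsor V P] {s : Set P} {x : P} :
    x ∈ intrinsicInterior 𝕜 s ↔ x ∈ affineSpan 𝕜 s ∧ s ∈ 𝓝[affineSpan 𝕜 s] x := by
  simp only [mem_intrinsicInterior, mem_interior_iff_mem_nhds]
  constructor
  · rintro ⟨y, hy, rfl⟩
    exact ⟨y.2, preimage_coe_mem_nhds_subtype.1 hy⟩
  · rintro ⟨hx, hs⟩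
    exact ⟨⟨x, hx⟩, preimage_coe_mem_nhds_subtype.2 hs, rfl⟩

theorem mem_closure_setOf_map_lt {E : Type*} [TopologicalSpace E] [AddCommGroup E] [Module ℝ E]
    [IsTopologicalAddGroup E] [ContinuousSMul ℝ E] {f : E →L[ℝ] ℝ} (hf : f ≠ 0) (g : E) :
    g ∈ closure {x | f g < f x} := by
  change g ∈ closure (f ⁻¹' Ioi (f g))
  rw [← (f.isOpenMap_of_ne_zero hf).preimage_closure_eq_closure_preimage f.continuous, closure_Ioi]
  exact le_refl (f g)

theorem dist_centralProj_right {𝕜 E : Type*} [NormedField 𝕜] [SeminormedAddCommGroup E]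
    [NormedSpace 𝕜 E] {f : E →ₗ[𝕜] 𝕜} (b : 𝕜) {r x : E} (h : f x ≠ f r) :
    dist (centralProj f b r x) x = ‖f x - b‖ / ‖f r - f x‖ * dist r x := by
  have h' : f r - f x ≠ 0 := sub_ne_zero.2 h.symm
  have coeff : 1 - (f r - b) / (f r - f x) = -((f x - b) / (f r - f x)) := by
    field_simp
    ring
  rw [centralProj, dist_lineMap_right, coeff, norm_neg, norm_div]

section Bounded

variable {E : Type*} [SeminormedAddCommGroup E] [NormedSpace ℝ E]
variable {f : E →L[ℝ] ℝ} {g : E} {b' : ℝ} {S R : Set E}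

theorem tendstoUniformlyOn_centralProj (hgb' : f g < b') (hR : Bornology.IsBounded R)
    (hRb' : R ⊆ {x | b' ≤ f x}) :
    TendstoUniformlyOn (fun x r => centralProj f.toLinearMap (f g) r x) (fun _ => g) (𝓝 g) R := by
  obtain ⟨D, hD⟩ := hR.subset_closedBall g
  let bound (x : E) : ℝ := ‖f x - f g‖ / (b' - f x) * (D + dist x g) + dist x g
  have bound_tendsto : Tendsto bound (𝓝 g) (𝓝 0) := by
    have hcont : ContinuousAt bound g := by
      have : b' - f g ≠ 0 := (sub_pos.2 hgb').ne'
      fun_prop (disch := assumption)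
    simpa [bound] using hcont.tendsto
  rw [Metric.tendstoUniformlyOn_iff]
  intro ε hε
  filter_upwards [bound_tendsto.eventually_lt_const hε,
    f.continuous.continuousAt.eventually_lt_const hgb'] with x hbound hx r hr
  have : 0 < b' - f x := sub_pos.2 hx
  have hb'r : b' ≤ f r := hRb' hr
  have le_norm : b' - f x ≤ ‖f r - f x‖ := (sub_le_sub_right hb'r _).trans (le_abs_self _)
  have dist_le : dist r x ≤ D + dist x g :=
    (dist_triangle_right r x g).trans (add_le_add_left (hD hr) _)
  rw [dist_comm]
  calc
    dist (centralProj f.toLinearMap (f g) r x) g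
        ≤ dist (centralProj f.toLinearMap (f g) r x) x + dist x g := dist_triangle _ _ _
    _ = ‖f x - f g‖ / ‖f r - f x‖ * dist r x + dist x g := by
          rw [dist_centralProj_right (f g) (hx.trans_le hb'r).ne]
          rfl
    _ ≤ ‖f x - f g‖ / (b' - f x) * (D + dist x g) + dist x g := by gcongr
    _ < ε := hbound

theorem eventually_forall_mem_convexHull_union_singleton
    (hS : convexHull ℝ S ∈ 𝓝[{x | f x = f g}] g) (hgb' : f g < b') (hR : Bornology.IsBounded R)
    (hRb' : R ⊆ {x | b' ≤ f x}) :
    ∀ᶠ x in 𝓝[{x | f g < f x}] g, ∀ r ∈ R, x ∈ convexHull ℝ (S ∪ {r}) := by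
  obtain ⟨ε, hε, hball⟩ := Metric.mem_nhdsWithin_iff.1 hS
  have hproj := Metric.tendstoUniformlyOn_iff.1 (tendstoUniformlyOn_centralProj hgb' hR hRb') ε hε
  filter_upwards [nhdsWithin_le_nhds hproj, self_mem_nhdsWithin,
    nhdsWithin_le_nhds (f.continuous.continuousAt.eventually_lt_const hgb')] with x hx hgx hxb' r hr
  have hxr : f x < f r := hxb'.trans_le (hRb' hr)
  have hshadow : centralProj f.toLinearMap (f g) r x ∈ convexHull ℝ S :=
    hball ⟨Metric.mem_ball'.2 (hx r hr), map_centralProj (f g) hxr.ne⟩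
  have hr_mem : r ∈ convexHull ℝ (S ∪ {r}) := subset_convexHull ℝ _ (mem_union_right _ rfl)
  exact (convex_convexHull ℝ _).segment_subset hr_mem
    (convexHull_mono subset_union_left hshadow) (mem_segment_centralProj (le_of_lt hgx) hxr)

end Bounded

theorem stmt2_general {E : Type*} [SeminormedAddCommGroup E] [NormedSpace ℝ E] {f : E →L[ℝ] ℝ}
    (hf : f ≠ 0) {b b' : ℝ} (hbb : b < b') {S R : Set E}
    (hspan : (affineSpan ℝ S : Set E) = {x | f x = b})
    (hint : (intrinsicInterior ℝ (convexHull ℝ S)).Nonempty)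
    (hR : Bornology.IsBounded R) (hRb' : R ⊆ {x | b' ≤ f x}) :
    ∃ x : E, b < f x ∧ ∀ r ∈ R, x ∈ convexHull ℝ (S ∪ {r}) := by
  obtain ⟨g, hg⟩ := hint
  rw [mem_intrinsicInterior_iff_mem_nhdsWithin, affineSpan_convexHull, hspan,
    ← SetLike.mem_coe, hspan] at hg
  obtain ⟨rfl, hnhds⟩ := hg
  have : (𝓝[{x | f g < f x}] g).NeBot :=
    mem_closure_iff_nhdsWithin_neBot.1 (mem_closure_setOf_map_lt hf g)
  exact (eventually_mem_nhdsWithin.and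
    (eventually_forall_mem_convexHull_union_singleton hnhds hbb hR hRb')).exists

theorem stmt2 (n : ℕ) (hn : 1 ≤ n) (a : Fin n → ℝ) (ha : a ≠ 0) (b b' : ℝ) (hbb : b < b')
    (s : Fin n → (Fin n → ℝ)) (hs : AffineIndependent ℝ s) (hsb : ∀ i, dotp a (s i) = b)
    (R : Set (Fin n → ℝ)) (hRne : R.Nonempty) (hRbdd : Bornology.IsBounded R)
    (hR : R ⊆ {x | b' ≤ dotp a x}) :
    ∃ x : Fin n → ℝ, b < dotp a x ∧ ∀ r ∈ R, x ∈ convexHull ℝ (Set.range s ∪ {r}) := by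
  have hf : dotProductEquiv ℝ (Fin n) a ≠ 0 := by simpa using ha
  have : Nonempty (Fin n) := Fin.pos_iff_nonempty.1 hn
  exact stmt2_general (f := (dotProductEquiv ℝ (Fin n) a).toContinuousLinearMap)
    (by simpa using ha) hbb (coe_affineSpan_range_eq_setOf_map_eq hs (by simp) hf hsb)
    ((range_nonempty s).convexHull.intrinsicInterior (convex_convexHull ℝ _)) hRbdd hR
end

section
/- Let n ≥ 2 and t ∈ {1,…,n−1}. Let P ⊆ [0,1]^n be a convex set, let c ∈ ℝ^n with c ≠ 0, and let δ ∈ ℝ. For J ⊆ {1,…,n} write P^J := P ∩ {x : x_j = 0 for all j ∈ J}. Assume: (i) P_I contains n+1 affinely independent points; (ii) c·x ≥ δ for all x ∈ P_I, and the set {x ∈ P_I : c·x = δ} contains n affinely independent points; (iii) for every J ⊆ {1,…,n} with |J| = n−t: the set (P^J)_I contains t+1 affinely independent points, the set {x ∈ (P^J)_I : c·x = δ} contains t affinely independent points, and there exists x^J ∈ P^J with c·x^J < δ. Then there exists x̄ ∈ L^{n−t}(P) with c·x̄ < δ; in particular L^{n−t}(P) ≠ P_I. -/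
open Set

def corners (n : ℕ) : Set (Fin n → ℝ) := {x | ∀ i, x i = 0 ∨ x i = 1}

def integerHull (n : ℕ) (P : Set (Fin n → ℝ)) : Set (Fin n → ℝ) :=
  convexHull ℝ (P ∩ corners n)

def Lk (n : ℕ) : ℕ → Set (Fin n → ℝ) → Set (Fin n → ℝ)
  | 0, P => P
  | k + 1, P => Lop n (Lk n k P)

/-- `P^J` : the points of `P` with all coordinates in `J` fixed to zero. -/
def restr (n : ℕ) (P : Set (Fin n → ℝ)) (J : Finset (Fin n)) : Set (Fin n → ℝ) :=
  P ∩ {x | ∀ j ∈ J, x j = 0}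

/-!
Going down from `|J| = n - t` to `J = ∅`, one finds points of `(L^k(P))^J` with `c · x < δ`, where
`|J| + k = n - t`. For the step, let `F` be the face `c · x = δ` of `(P^J)_I`. Each `i ∉ J` comes
with a point `y i` of `(L^k(P))^(J ∪ {i})` below the hyperplane, and `conv (F ∪ {y i})` lies in the
`i`-th of the sets whose intersection is `L^(k+1)(P)`. These convex hulls have a common point below
the hyperplane: `F` is full-dimensional in `{x | x_J = 0, c · x = δ}`, so all points of a short
segment leaving a relative interior point of `F` downwards lie in every one of them.

Full-dimensionality of `F` passes from `|J| = n - t` to smaller `J`, because when at least three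
coordinates are free every direction orthogonal to `c` is a sum of two such directions, each of
which vanishes in one more coordinate. This is where `t ≥ 2` enters. If `t = 1`, then `P^J` is
contained in an edge of the cube; it has at least two vertices, so it is the whole edge and lies in
`P_I`, leaving no room for a point below the hyperplane.
-/

section ConvexGeometry

open Filter Topology

variable {V : Type*} {F : Set V}

theorem eventually_add_smul_mem_of_mem_intrinsicInterior [AddCommGroup V] [Module ℝ V]
    [TopologicalSpace V] [ContinuousAdd V] [ContinuousSMul ℝ V] {z v : V}
    (hz : z ∈ intrinsicInterior ℝ F) (hv : v ∈ vectorSpan ℝ F) :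
    ∀ᶠ e : ℝ in 𝓝 0, z + e • v ∈ F := by
  obtain ⟨y, hy, rfl⟩ := mem_intrinsicInterior.1 hz
  have hmem (e : ℝ) : (y : V) + e • v ∈ affineSpan ℝ F := by
    rw [add_comm]
    exact AffineSubspace.vadd_mem_of_mem_direction
      (direction_affineSpan ℝ F ▸ Submodule.smul_mem _ e hv) y.2
  let line : ℝ → affineSpan ℝ F := fun e => ⟨y + e • v, hmem e⟩
  have hline : Continuous line := by fun_prop
  have hline_zero : line 0 = y := Subtype.ext (by simp [line])
  exact hline.continuousAt.eventually (hline_zero ▸ mem_interior_iff_mem_nhds.1 hy)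

theorem eventually_add_smul_mem_convexJoin [AddCommGroup V] [Module ℝ V] {z d y : V} {l : ℝ}
    (hl : 0 ≤ l) (hF : ∀ᶠ e : ℝ in 𝓝 0, z + e • (d - l • (y - z)) ∈ F) :
    ∀ᶠ e : ℝ in 𝓝[>] 0, z + e • d ∈ convexJoin ℝ F {y} := by
  have hscale : Tendsto (fun e : ℝ => e / (1 - e * l)) (𝓝 0) (𝓝 0) := by
    have : ContinuousAt (fun e : ℝ => e / (1 - e * l)) 0 :=
      ContinuousAt.div (by fun_prop) (by fun_prop) (by simp)
    simpa [ContinuousAt] using this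
  have hpos : ∀ᶠ e : ℝ in 𝓝 0, 0 < 1 - e * l :=
    (by fun_prop : ContinuousAt (fun e : ℝ => 1 - e * l) 0).eventually (lt_mem_nhds (by simp))
  filter_upwards [nhdsWithin_le_nhds (hscale.eventually hF), nhdsWithin_le_nhds hpos,
    self_mem_nhdsWithin] with e hmem hpos (he : 0 < e)
  refine mem_convexJoin.2 ⟨_, hmem, y, rfl, 1 - e * l, e * l, hpos.le, by positivity, by ring, ?_⟩
  rw [smul_add, smul_smul, mul_div_cancel₀ _ hpos.ne']
  module

theorem exists_lt_forall_mem_convexJoin [NormedAddCommGroup V] [NormedSpace ℝ V]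
    [FiniteDimensional ℝ V] {ι : Type*} [Finite ι] [Nonempty ι]
    (hF : Convex ℝ F) (hne : F.Nonempty) {U : Submodule ℝ V} (hFU : F ⊆ U)
    {φ : V →ₗ[ℝ] ℝ} {δ : ℝ} (hFδ : ∀ f ∈ F, φ f = δ)
    (hspan : U ⊓ LinearMap.ker φ ≤ vectorSpan ℝ F)
    {y : ι → V} (hyU : ∀ i, y i ∈ U) (hyδ : ∀ i, φ (y i) < δ) :
    ∃ u, φ u < δ ∧ ∀ i, u ∈ convexJoin ℝ F {y i} := by
  obtain ⟨z, hz⟩ := hne.intrinsicInterior hF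
  have hzF : z ∈ F := intrinsicInterior_subset hz
  let i₀ : ι := Classical.arbitrary ι
  have hjoin (i : ι) : ∀ᶠ e : ℝ in 𝓝[>] 0, z + e • (y i₀ - z) ∈ convexJoin ℝ F {y i} := by
    -- `l` is chosen so that `(y i₀ - z) - l • (y i - z)` is parallel to the hyperplane `φ = δ`.
    let l : ℝ := (φ (y i₀) - δ) / (φ (y i) - δ)
    have hl : 0 ≤ l :=
      div_nonneg_of_nonpos (sub_nonpos.2 (hyδ i₀).le) (sub_nonpos.2 (hyδ i).le)
    refine eventually_add_smul_mem_convexJoin hl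
      (eventually_add_smul_mem_of_mem_intrinsicInterior hz (hspan ⟨?_, ?_⟩))
    · exact U.sub_mem (U.sub_mem (hyU i₀) (hFU hzF))
        (U.smul_mem l (U.sub_mem (hyU i) (hFU hzF)))
    · simp [l, hFδ z hzF, div_mul_cancel₀ _ (sub_ne_zero.2 (hyδ i).ne)]
  obtain ⟨e, hmem, he : 0 < e⟩ := ((eventually_all.2 hjoin).and self_mem_nhdsWithin).exists
  refine ⟨_, ?_, hmem⟩
  have : e * (φ (y i₀) - δ) < 0 := mul_neg_of_pos_of_neg he (sub_neg.2 (hyδ i₀))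
  simpa [hFδ z hzF] using this

end ConvexGeometry

theorem finrank_le_card_of_forall_eq_zero {K ι : Type*} [Field K]
    {W : Submodule K (ι → K)} {s : Finset ι}
    (h : ∀ v ∈ W, (∀ i ∈ s, v i = 0) → v = 0) : Module.finrank K W ≤ s.card := by
  let f : W →ₗ[K] (s → K) := (LinearMap.funLeft K K Subtype.val).comp W.subtype
  have hf : Function.Injective f := LinearMap.ker_eq_bot.1 <| LinearMap.ker_eq_bot'.2 fun w hw =>
    Subtype.ext <| h w w.2 fun i hi => congrFun hw ⟨i, hi⟩
  simpa using LinearMap.finrank_le_finrank_of_injective hf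

section Directions

variable {n : ℕ} {c : Fin n → ℝ} {J : Finset (Fin n)}

/-- The linear functional `x ↦ c · x`. -/
def dotpLinear (c : Fin n → ℝ) : (Fin n → ℝ) →ₗ[ℝ] ℝ := dotProductBilin ℝ ℝ c

@[simp]
theorem dotpLinear_apply (c x : Fin n → ℝ) : dotpLinear c x = dotp c x := rfl

theorem dotp_sub (c x y : Fin n → ℝ) : dotp c (x - y) = dotp c x - dotp c y :=
  map_sub (dotpLinear c) x y

theorem dotp_eq_mul_of_forall_ne {k : Fin n} {v : Fin n → ℝ} (h : ∀ j ≠ k, c j * v j = 0) :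
    dotp c v = c k * v k :=
  Finset.sum_eq_single k (fun j _ hj => h j hj) (by simp)

theorem exists_notMem_ne_zero_of_dotp_ne {x y : Fin n → ℝ} (hx : ∀ j ∈ J, x j = 0)
    (hy : ∀ j ∈ J, y j = 0) (hxy : dotp c x ≠ dotp c y) : ∃ k ∉ J, c k ≠ 0 := by
  contrapose! hxy
  refine Finset.sum_congr rfl fun j _ => ?_
  by_cases hj : j ∈ J
  · rw [hx j hj, hy j hj]
  · rw [hxy j hj, zero_mul, zero_mul]

/-- The coordinate subspace `{x | x_j = 0 for all j ∈ J}` cutting out `P^J`. -/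
def coordSubspace (J : Finset (Fin n)) : Submodule ℝ (Fin n → ℝ) := Submodule.pi J fun _ => ⊥

@[simp]
theorem mem_coordSubspace {x : Fin n → ℝ} : x ∈ coordSubspace J ↔ ∀ j ∈ J, x j = 0 := by
  simp [coordSubspace]

/-- The directions of the affine subspace `{x | x_j = 0 for all j ∈ J, c · x = δ}` spanned by the
face `c · x = δ` of `(P^J)_I` when that face has the largest possible dimension. -/
def faceDir (c : Fin n → ℝ) (J : Finset (Fin n)) : Submodule ℝ (Fin n → ℝ) :=
  coordSubspace J ⊓ LinearMap.ker (dotpLinear c)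

theorem mem_faceDir {v : Fin n → ℝ} : v ∈ faceDir c J ↔ (∀ j ∈ J, v j = 0) ∧ dotp c v = 0 := by
  simp [faceDir]

theorem finrank_faceDir_lt {k : Fin n} (hk : k ∉ J) (hck : c k ≠ 0) :
    Module.finrank ℝ (faceDir c J) < n - J.card := by
  have hvanish : ∀ v ∈ faceDir c J, (∀ j ∈ (Jᶜ).erase k, v j = 0) → v = 0 := by
    intro v hv hv'
    obtain ⟨hvJ, hvc⟩ := mem_faceDir.1 hv
    have hoff (j : Fin n) (hjk : j ≠ k) : v j = 0 := by
      by_cases hj : j ∈ J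
      · exact hvJ j hj
      · exact hv' j (by simp [hj, hjk])
    have hvk : c k * v k = 0 := by
      rw [← dotp_eq_mul_of_forall_ne fun j hj => by rw [hoff j hj, mul_zero], hvc]
    funext j
    obtain rfl | hjk := eq_or_ne j k
    · exact (mul_eq_zero.1 hvk).resolve_left hck
    · exact hoff j hjk
  calc Module.finrank ℝ (faceDir c J) ≤ ((Jᶜ).erase k).card :=
        finrank_le_card_of_forall_eq_zero hvanish
    _ < (Jᶜ).card := Finset.card_erase_lt_of_mem (Finset.mem_compl.2 hk)
    _ = n - J.card := by rw [Finset.card_compl, Fintype.card_fin]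

theorem faceDir_le_sup {i j k : Fin n} (hi : i ∉ J) (hk : k ∉ J) (hij : i ≠ j) (hik : i ≠ k)
    (hjk : j ≠ k) (hck : c k ≠ 0) :
    faceDir c J ≤ faceDir c (insert i J) ⊔ faceDir c (insert j J) := by
  intro v hv
  obtain ⟨hvJ, hvc⟩ := mem_faceDir.1 hv
  -- `w` carries the `i`-th coordinate of `v`, corrected along `k` to be orthogonal to `c`.
  let w : Fin n → ℝ := Pi.single i (v i) - Pi.single k (c i * v i / c k)
  have hwi : w i = v i := by simp [w, hik]
  have hw_off (a : Fin n) (hai : a ≠ i) (hak : a ≠ k) : w a = 0 := by simp [w, hai, hak]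
  have hwJ (a : Fin n) (ha : a ∈ J) : w a = 0 :=
    hw_off a (ne_of_mem_of_not_mem ha hi) (ne_of_mem_of_not_mem ha hk)
  have hwc : dotp c w = 0 := by
    rw [dotp_sub, dotp, dotp]
    simp only [Pi.single_apply, mul_ite, mul_zero, Finset.sum_ite_eq', Finset.mem_univ, if_true]
    rw [mul_div_cancel₀ _ hck, sub_self]
  refine Submodule.mem_sup.2 ⟨v - w, mem_faceDir.2 ⟨?_, ?_⟩, w, mem_faceDir.2 ⟨?_, hwc⟩,
    sub_add_cancel v w⟩
  · rw [Finset.forall_mem_insert]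
    exact ⟨by simp [hwi], fun a ha => by simp [hvJ a ha, hwJ a ha]⟩
  · rw [dotp_sub, hvc, hwc, sub_self]
  · exact Finset.forall_mem_insert _ _ _ |>.2 ⟨hw_off j hij.symm hjk, hwJ⟩

end Directions

section LiftAndProject

variable {n : ℕ} {P Q : Set (Fin n → ℝ)} {J K : Finset (Fin n)}

theorem integerHull_mono (h : P ⊆ Q) : integerHull n P ⊆ integerHull n Q :=
  convexHull_mono (inter_subset_inter_left _ h)

theorem restr_subset : restr n P J ⊆ P := inter_subset_left

theorem restr_anti (h : J ⊆ K) : restr n P K ⊆ restr n P J :=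
  inter_subset_inter_right _ fun _ hx j hj => hx j (h hj)

theorem integerHull_subset (hP : Convex ℝ P) : integerHull n P ⊆ P :=
  convexHull_min inter_subset_left hP

theorem integerHull_restr_subset_coordSubspace :
    integerHull n (restr n P J) ⊆ (coordSubspace J : Set (Fin n → ℝ)) :=
  convexHull_min (fun _ hx => mem_coordSubspace.2 hx.1.2) (coordSubspace J).convex

theorem integerHull_subset_convexHull_union (i : Fin n) :
    integerHull n P ⊆ convexHull ℝ ((P ∩ {x | x i = 0}) ∪ (P ∩ {x | x i = 1})) :=
  convexHull_mono fun _ hx => (hx.2 i).imp (And.intro hx.1) (And.intro hx.1)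

theorem convex_Lk (hP : Convex ℝ P) : ∀ k, Convex ℝ (Lk n k P)
  | 0 => hP
  | _ + 1 => convex_iInter fun _ => convex_convexHull ℝ _

theorem inter_corners_subset_Lk : ∀ k, P ∩ corners n ⊆ Lk n k P
  | 0 => inter_subset_left
  | k + 1 => fun _ hx => mem_iInter.2 fun i => integerHull_subset_convexHull_union i <|
      subset_convexHull ℝ _ ⟨inter_corners_subset_Lk k hx, hx.2⟩

theorem integerHull_restr_subset_integerHull_restr_Lk (k : ℕ) :
    integerHull n (restr n P J) ⊆ integerHull n (restr n (Lk n k P) J) :=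
  convexHull_mono fun _ hx => ⟨⟨inter_corners_subset_Lk k ⟨hx.1.1, hx.2⟩, hx.1.2⟩, hx.2⟩

end LiftAndProject

section Face

variable {n : ℕ} {P Q : Set (Fin n → ℝ)} {c : Fin n → ℝ} {δ : ℝ} {J K : Finset (Fin n)}

/-- The face of `(P^J)_I` on the hyperplane `c · x = δ`. -/
def face (P : Set (Fin n → ℝ)) (c : Fin n → ℝ) (δ : ℝ) (J : Finset (Fin n)) : Set (Fin n → ℝ) :=
  integerHull n (restr n P J) ∩ {x | dotp c x = δ}

theorem convex_face : Convex ℝ (face P c δ J) :=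
  (convex_convexHull ℝ _).inter (convex_hyperplane (dotpLinear c).isLinear δ)

theorem face_anti (h : J ⊆ K) : face P c δ K ⊆ face P c δ J :=
  inter_subset_inter_left _ (integerHull_mono (restr_anti h))

theorem face_subset_face_Lk (k : ℕ) : face P c δ J ⊆ face (Lk n k P) c δ J :=
  inter_subset_inter_left _ (integerHull_restr_subset_integerHull_restr_Lk k)

theorem vectorSpan_face_le : vectorSpan ℝ (face P c δ J) ≤ faceDir c J := by
  rw [vectorSpan_def, Submodule.span_le]
  rintro _ ⟨x, hx, y, hy, rfl⟩
  refine ⟨(coordSubspace J).sub_mem (integerHull_restr_subset_coordSubspace hx.1)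
    (integerHull_restr_subset_coordSubspace hy.1), ?_⟩
  change dotp c (x - y) = 0
  rw [dotp_sub, hx.2, hy.2, sub_self]

theorem faceDir_le_vectorSpan_face_of_affineIndependent {t : ℕ} {s : Fin t → (Fin n → ℝ)}
    (hs : AffineIndependent ℝ s) (hmem : ∀ i, s i ∈ face P c δ J) (hcard : n ≤ J.card + t)
    (hc : ∃ k ∉ J, c k ≠ 0) : faceDir c J ≤ vectorSpan ℝ (face P c δ J) := by
  obtain ⟨k, hk, hck⟩ := hc
  have hrange : vectorSpan ℝ (range s) ≤ vectorSpan ℝ (face P c δ J) :=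
    vectorSpan_mono ℝ (range_subset_iff.2 hmem)
  have hlt := finrank_faceDir_lt hk hck
  have : Nonempty (Fin t) := ⟨⟨0, by omega⟩⟩
  have hrank := hs.finrank_vectorSpan_add_one
  rw [Fintype.card_fin] at hrank
  exact (Submodule.eq_of_le_of_finrank_le (hrange.trans vectorSpan_face_le) (by omega)).ge.trans
    hrange

theorem faceDir_le_vectorSpan_face {m : ℕ} (hm : m + 2 ≤ n)
    (hspan : ∀ J : Finset (Fin n), J.card = m → faceDir c J ≤ vectorSpan ℝ (face P c δ J))
    (hc : ∀ J : Finset (Fin n), J.card = m → ∃ k ∉ J, c k ≠ 0) (hJ : J.card ≤ m) :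
    faceDir c J ≤ vectorSpan ℝ (face P c δ J) := by
  induction hd : m - J.card generalizing J with
  | zero => exact hspan J (by omega)
  | succ d ih =>
    obtain ⟨K, hJK, hK⟩ := Finset.exists_superset_card_eq hJ (by simp; omega)
    obtain ⟨k, hkK, hck⟩ := hc K hK
    have hk : k ∉ J := fun h => hkK (hJK h)
    have hfree : 1 < ((insert k J)ᶜ).card := by
      rw [Finset.card_compl, Finset.card_insert_of_notMem hk, Fintype.card_fin]
      omega
    obtain ⟨i, hi, j, hj, hij⟩ := Finset.one_lt_card.1 hfree
    simp only [Finset.mem_compl, Finset.mem_insert, not_or] at hi hj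
    have hinsert (a : Fin n) (ha : a ∉ J) :
        faceDir c (insert a J) ≤ vectorSpan ℝ (face P c δ J) :=
      have hcard := Finset.card_insert_of_notMem ha
      (ih (by omega) (by omega)).trans (vectorSpan_mono ℝ (face_anti (Finset.subset_insert a J)))
    calc faceDir c J ≤ faceDir c (insert i J) ⊔ faceDir c (insert j J) :=
          faceDir_le_sup hi.2 hk hij hi.1 hj.1 hck
      _ ≤ vectorSpan ℝ (face P c δ J) := sup_le (hinsert i hi.2) (hinsert j hj.2)

theorem exists_mem_restr_Lop_dotp_lt (hQ : Convex ℝ Q) (hne : (face Q c δ J).Nonempty)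
    (hspan : faceDir c J ≤ vectorSpan ℝ (face Q c δ J)) (hJ : ∃ i, i ∉ J)
    (hlt : ∀ i ∉ J, ∃ y ∈ restr n Q (insert i J), dotp c y < δ) :
    ∃ u ∈ restr n (Lop n Q) J, dotp c u < δ := by
  have : Nonempty {i // i ∉ J} := nonempty_subtype.2 hJ
  choose! y hy hyδ using hlt
  have hyJ (i : Fin n) (hi : i ∉ J) : y i ∈ restr n Q J :=
    restr_anti (Finset.subset_insert i J) (hy i hi)
  obtain ⟨u, hu, hjoin⟩ := exists_lt_forall_mem_convexJoin convex_face hne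
    (fun x hx => integerHull_restr_subset_coordSubspace hx.1) (φ := dotpLinear c)
    (fun x hx => hx.2) hspan (fun i : {i // i ∉ J} => mem_coordSubspace.2 (hyJ i i.2).2)
    (fun i => hyδ i i.2)
  have hface : face Q c δ J ⊆ integerHull n Q := fun x hx => integerHull_mono restr_subset hx.1
  obtain ⟨i₀, hi₀⟩ := hJ
  have huQ : u ∈ Q :=
    convexJoin_subset (hface.trans (integerHull_subset hQ))
      (singleton_subset_iff.2 (hyJ i₀ hi₀).1) hQ (hjoin ⟨i₀, hi₀⟩)
  have huJ : ∀ j ∈ J, u j = 0 := mem_coordSubspace.1 <|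
    convexJoin_subset (fun x hx => integerHull_restr_subset_coordSubspace hx.1)
      (singleton_subset_iff.2 (mem_coordSubspace.2 (hyJ i₀ hi₀).2)) (coordSubspace J).convex
      (hjoin ⟨i₀, hi₀⟩)
  refine ⟨u, ⟨mem_iInter.2 fun i => ?_, huJ⟩, hu⟩
  by_cases hi : i ∈ J
  · exact subset_convexHull ℝ _ (Or.inl ⟨huQ, huJ i hi⟩)
  · exact convexJoin_subset (hface.trans (integerHull_subset_convexHull_union i))
      (singleton_subset_iff.2 <| subset_convexHull ℝ _ <|
        Or.inl ⟨(hy i hi).1, (hy i hi).2 i (Finset.mem_insert_self i J)⟩)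
      (convex_convexHull ℝ _) (hjoin ⟨i, hi⟩)

theorem exists_mem_restr_Lk_dotp_lt {m : ℕ} (hm : m ≤ n) (hP : Convex ℝ P)
    (hne : ∀ J : Finset (Fin n), J.card < m → (face P c δ J).Nonempty)
    (hspan : ∀ J : Finset (Fin n), J.card < m → faceDir c J ≤ vectorSpan ℝ (face P c δ J))
    (hlt : ∀ J : Finset (Fin n), J.card = m → ∃ x ∈ restr n P J, dotp c x < δ) (k : ℕ)
    (hJ : J.card + k = m) : ∃ x ∈ restr n (Lk n k P) J, dotp c x < δ := by
  induction k generalizing J with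
  | zero => exact hlt J hJ
  | succ k ih =>
    have hface : face P c δ J ⊆ face (Lk n k P) c δ J := face_subset_face_Lk k
    obtain ⟨i, -, hi⟩ : ∃ i ∈ Finset.univ, i ∉ J :=
      Finset.exists_mem_notMem_of_card_lt_card (by rw [Finset.card_fin]; omega)
    refine exists_mem_restr_Lop_dotp_lt (convex_Lk hP k) ((hne J (by omega)).mono hface)
      ((hspan J (by omega)).trans (vectorSpan_mono ℝ hface)) ⟨i, hi⟩ fun j hj => ih ?_
    rw [Finset.card_insert_of_notMem hj]
    omega

end Face

section Edge

variable {n : ℕ} {P : Set (Fin n → ℝ)} {c : Fin n → ℝ} {δ : ℝ}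

theorem subset_integerHull_of_forall_ne_eq_zero (hP : P ⊆ cube n) {i : Fin n}
    (hline : ∀ x ∈ P, ∀ j ≠ i, x j = 0) (hnt : (integerHull n P).Nontrivial) :
    P ⊆ integerHull n P := by
  have hcorners : (P ∩ corners n).Nontrivial := by
    rw [← not_subsingleton_iff] at hnt ⊢
    intro h
    rw [integerHull, h.convex.convexHull_eq] at hnt
    exact hnt h
  obtain ⟨p, hp, q, hq, hpq⟩ := hcorners
  have hpqi : p i ≠ q i := fun h => hpq <| funext fun j => by
    obtain rfl | hj := eq_or_ne j i
    · exact h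
    · rw [hline p hp.1 j hj, hline q hq.1 j hj]
  wlog hpi : p i = 0 generalizing p q
  · exact this q hq p hp hpq.symm hpqi.symm <|
      (hq.2 i).resolve_right fun h => hpqi (((hp.2 i).resolve_left hpi).trans h.symm)
  have hqi : q i = 1 := (hq.2 i).resolve_left fun h => hpqi (hpi.trans h.symm)
  intro x hx
  have hxpq : (1 - x i) • p + x i • q = x := by
    funext j
    obtain rfl | hj := eq_or_ne j i
    · simp [hpi, hqi]
    · simp [hline p hp.1 j hj, hline q hq.1 j hj, hline x hx j hj]
  rw [← hxpq]
  exact convex_convexHull ℝ _ (subset_convexHull ℝ _ hp) (subset_convexHull ℝ _ hq)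
    (sub_nonneg.2 (hP hx i).2) (hP hx i).1 (sub_add_cancel _ _)

theorem le_dotp_of_mem_restr_univ_erase (hP : P ⊆ cube n)
    (hvalid : ∀ x ∈ integerHull n P, δ ≤ dotp c x) {i : Fin n}
    (hnt : (integerHull n (restr n P (Finset.univ.erase i))).Nontrivial) {x : Fin n → ℝ}
    (hx : x ∈ restr n P (Finset.univ.erase i)) : δ ≤ dotp c x :=
  hvalid x <| integerHull_mono restr_subset <|
    subset_integerHull_of_forall_ne_eq_zero (restr_subset.trans hP)
      (fun _ hy j hj => hy.2 j (Finset.mem_erase.2 ⟨hj, Finset.mem_univ j⟩)) hnt hx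

theorem two_le_of_forall_exists_dotp_lt {t : ℕ} (hn : 0 < n) (ht : 1 ≤ t) (hP : P ⊆ cube n)
    (hvalid : ∀ x ∈ integerHull n P, δ ≤ dotp c x)
    (hJ : ∀ J : Finset (Fin n), J.card = n - t →
      (∃ s : Fin (t + 1) → (Fin n → ℝ),
        AffineIndependent ℝ s ∧ ∀ i, s i ∈ integerHull n (restr n P J)) ∧
      ∃ x ∈ restr n P J, dotp c x < δ) : 2 ≤ t := by
  by_contra! ht2
  obtain rfl : t = 1 := by omega
  obtain ⟨⟨s, hs, hmem⟩, x, hx, hlt⟩ := hJ (Finset.univ.erase ⟨0, hn⟩) (by simp)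
  have hnt := nontrivial_of_mem_mem_ne (hmem 0) (hmem 1) (hs.injective.ne zero_ne_one)
  exact hlt.not_ge (le_dotp_of_mem_restr_univ_erase hP hvalid hnt hx)

end Edge

theorem stmt3_general (n t : ℕ) (ht : 2 ≤ t) (P : Set (Fin n → ℝ)) (hPconv : Convex ℝ P)
    (c : Fin n → ℝ) (δ : ℝ)
    (hJ : ∀ J : Finset (Fin n), J.card = n - t →
      (∃ s : Fin t → (Fin n → ℝ),
        AffineIndependent ℝ s ∧ ∀ i, s i ∈ integerHull n (restr n P J) ∧ dotp c (s i) = δ) ∧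
      (∃ x ∈ restr n P J, dotp c x < δ)) :
    ∃ xbar ∈ Lk n (n - t) P, dotp c xbar < δ := by
  have hne (J : Finset (Fin n)) (hcard : J.card ≤ n - t) : (face P c δ J).Nonempty := by
    obtain ⟨K, hJK, hK⟩ := Finset.exists_superset_card_eq hcard (by simp)
    obtain ⟨⟨s, -, hs⟩, -⟩ := hJ K hK
    exact ⟨s ⟨0, by omega⟩, face_anti hJK (hs _)⟩
  have hsupp (J : Finset (Fin n)) (hcard : J.card = n - t) : ∃ k ∉ J, c k ≠ 0 := by
    obtain ⟨-, x, hx, hlt⟩ := hJ J hcard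
    obtain ⟨f, hf, hfδ⟩ := hne J hcard.le
    have hfJ := mem_coordSubspace.1 (integerHull_restr_subset_coordSubspace hf)
    exact exists_notMem_ne_zero_of_dotp_ne hx.2 hfJ (hlt.trans_eq hfδ.symm).ne
  have hspan_base (J : Finset (Fin n)) (hcard : J.card = n - t) :
      faceDir c J ≤ vectorSpan ℝ (face P c δ J) := by
    obtain ⟨⟨s, hs, hmem⟩, -⟩ := hJ J hcard
    exact faceDir_le_vectorSpan_face_of_affineIndependent hs hmem (by omega) (hsupp J hcard)
  have hspan (J : Finset (Fin n)) (hcard : J.card < n - t) :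
      faceDir c J ≤ vectorSpan ℝ (face P c δ J) :=
    faceDir_le_vectorSpan_face (by omega) hspan_base hsupp hcard.le
  obtain ⟨x, hx, hlt⟩ := exists_mem_restr_Lk_dotp_lt (J := ∅) (n.sub_le t) hPconv
    (fun J hcard => hne J hcard.le) hspan (fun J hcard => (hJ J hcard).2) (n - t) (by simp)
  exact ⟨x, hx.1, hlt⟩

theorem stmt3 (n t : ℕ) (hn : 2 ≤ n) (ht1 : 1 ≤ t) (htn : t ≤ n - 1)
    (P : Set (Fin n → ℝ)) (hPcube : P ⊆ cube n) (hPconv : Convex ℝ P)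
    (c : Fin n → ℝ) (hc : c ≠ 0) (δ : ℝ)
    -- (i) `P_I` is full-dimensional
    (hfull : ∃ s : Fin (n + 1) → (Fin n → ℝ),
      AffineIndependent ℝ s ∧ ∀ i, s i ∈ integerHull n P)
    -- (ii) `c·x ≥ δ` is a facet of `P_I`
    (hvalid : ∀ x ∈ integerHull n P, δ ≤ dotp c x)
    (hfacet : ∃ s : Fin n → (Fin n → ℝ),
      AffineIndependent ℝ s ∧ ∀ i, s i ∈ integerHull n P ∧ dotp c (s i) = δ)
    -- (iii) conditions on each `P^J` with `|J| = n - t`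
    (hJ : ∀ J : Finset (Fin n), J.card = n - t →
      (∃ s : Fin (t + 1) → (Fin n → ℝ),
        AffineIndependent ℝ s ∧ ∀ i, s i ∈ integerHull n (restr n P J)) ∧
      (∃ s : Fin t → (Fin n → ℝ),
        AffineIndependent ℝ s ∧ ∀ i, s i ∈ integerHull n (restr n P J) ∧ dotp c (s i) = δ) ∧
      (∃ x ∈ restr n P J, dotp c x < δ)) :
    (∃ xbar ∈ Lk n (n - t) P, dotp c xbar < δ) ∧ Lk n (n - t) P ≠ integerHull n P := by
  have ht : 2 ≤ t := two_le_of_forall_exists_dotp_lt (by omega) ht1 hPcube hvalid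
    fun J hcard => ⟨(hJ J hcard).1, (hJ J hcard).2.2⟩
  obtain ⟨x, hx, hlt⟩ := stmt3_general n t ht P hPconv c δ fun J hcard => (hJ J hcard).2
  exact ⟨⟨x, hx, hlt⟩, fun h => hlt.not_ge (hvalid x (h ▸ hx))⟩
end

section
/- Let n ≥ 1, let k ∈ {1,…,n}, let π be a permutation of {1,…,n}, and let 𝒯 := 𝒯^{π,k} be the skewed k-tree. Then: (i) the map v ↦ J¹_v is a bijection from the leaves of 𝒯 onto the family {J ⊆ {1,…,n} : |J| ≤ k}; in particular 𝒯 has exactly ∑_{i=0}^{k} binom(n,i) leaves; and (ii) every leaf v of 𝒯 satisfies |J¹_v| = k or J⁰_v ∪ J¹_v = {1,…,n}. -/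
open Set

/-- Branching trees over the index set `Fin n`. -/
inductive BTree (n : ℕ) : Type
  | leaf : BTree n
  | node : Fin n → BTree n → BTree n → BTree n

/-- The list of leaves of a tree, each recorded as the pair `(J⁰, J¹)` of sets of indices
fixed to `0` resp. `1` on the path from the root to the leaf. -/
def leavesJ {n : ℕ} : BTree n → Finset (Fin n) → Finset (Fin n) →
    List (Finset (Fin n) × Finset (Fin n))
  | .leaf, J0, J1 => [(J0, J1)]
  | .node j t0 t1, J0, J1 => leavesJ t0 (insert j J0) J1 ++ leavesJ t1 J0 (insert j J1)

/-- The skewed `k`-tree construction: `skew k ℓ c` branches on the indices of `ℓ` in order,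
stopping (with a leaf) whenever the counter of variables fixed to one reaches `k`. -/
def skew {n : ℕ} (k : ℕ) : List (Fin n) → ℕ → BTree n
  | [], _ => .leaf
  | j :: l, c => if c < k then .node j (skew k l c) (skew k l (c + 1)) else .leaf

/-- The skewed `k`-tree `𝒯^{π,k}` for a permutation `π` of the indices. -/
def skewTree (n k : ℕ) (π : Equiv.Perm (Fin n)) : BTree n :=
  skew k ((List.finRange n).map π) 0

/-! Below a node of a skewed tree with list `j :: l` and remaining budget `r + 1 = k - c`, the
leaves split according to whether `j ∈ J¹`: the left subtree lists the subsets of `l` of size at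
most `r + 1`, the right one the subsets of `l` of size at most `r` with `j` added. This is the
recursion by which the subsets of `{j} ∪ l` of size at most `r + 1` arise from subsets of `l`.
A path ends only when its budget or its list is exhausted, which is the dichotomy (ii). -/

theorem subset_insert_and_card_le_succ_iff {α : Type*} [DecidableEq α] {a : α} {s : Finset α}
    (ha : a ∉ s) {t : Finset α} {r : ℕ} :
    t ⊆ insert a s ∧ t.card ≤ r + 1 ↔
      (t ⊆ s ∧ t.card ≤ r + 1) ∨ ∃ u, (u ⊆ s ∧ u.card ≤ r) ∧ insert a u = t := by
  constructor
  · rintro ⟨hts, hcard⟩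
    by_cases hat : a ∈ t
    · refine .inr ⟨t.erase a, ⟨Finset.subset_insert_iff.1 hts, ?_⟩, Finset.insert_erase hat⟩
      rw [Finset.card_erase_of_mem hat]
      omega
    · exact .inl ⟨(Finset.subset_insert_iff_of_notMem hat).1 hts, hcard⟩
  · rintro (⟨hts, hcard⟩ | ⟨u, ⟨hus, hcard⟩, rfl⟩)
    · exact ⟨hts.trans (Finset.subset_insert a s), hcard⟩
    · rw [Finset.card_insert_of_notMem (mt (@hus a) ha)]
      exact ⟨Finset.insert_subset_insert a hus, Nat.succ_le_succ hcard⟩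

theorem card_filter_powerset_card_le {α : Type*} (s : Finset α) (r : ℕ) :
    (s.powerset.filter (·.card ≤ r)).card = ∑ i ∈ Finset.range (r + 1), s.card.choose i := by
  rw [Finset.card_eq_sum_card_fiberwise (f := Finset.card) (t := Finset.range (r + 1))]
  · refine Finset.sum_congr rfl fun i hi => ?_
    have hir : i ≤ r := Nat.lt_succ_iff.1 (Finset.mem_range.1 hi)
    rw [← Finset.card_powersetCard, Finset.filter_filter, Finset.powersetCard_eq_filter]
    exact congrArg Finset.card (Finset.filter_congr fun t _ =>
      and_iff_right_of_imp fun ht => ht.trans_le hir)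
  · intro t ht
    exact Finset.mem_range.2 (Nat.lt_succ_of_le (Finset.mem_filter.1 ht).2)

section SkewedTree

variable {n : ℕ}

theorem leavesJ_eq_map (t : BTree n) (J0 J1 : Finset (Fin n)) :
    leavesJ t J0 J1 = (leavesJ t ∅ ∅).map fun p => (J0 ∪ p.1, J1 ∪ p.2) := by
  induction t generalizing J0 J1 with
  | leaf => simp [leavesJ]
  | node j t0 t1 ih0 ih1 =>
    simp only [leavesJ]
    rw [ih0 (insert j J0), ih1 J0, ih0 (insert j ∅), ih1 ∅ (insert j ∅)]
    simp [Function.comp_def, Finset.insert_union, Finset.union_insert]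

theorem leavesJ_node (j : Fin n) (t0 t1 : BTree n) :
    leavesJ (.node j t0 t1) ∅ ∅ =
      (leavesJ t0 ∅ ∅).map (fun p => (insert j p.1, p.2)) ++
        (leavesJ t1 ∅ ∅).map (fun p => (p.1, insert j p.2)) := by
  rw [leavesJ, leavesJ_eq_map t0, leavesJ_eq_map t1]
  simp

/-- The sets `J¹_v`, where `v` runs over the leaves of `t`. They form a list rather than a `Finset`
so that injectivity of `v ↦ J¹_v` can be stated as `Nodup`. -/
def oneSets (t : BTree n) : List (Finset (Fin n)) :=
  (leavesJ t ∅ ∅).map Prod.snd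

theorem oneSets_leaf : oneSets (.leaf : BTree n) = [∅] := rfl

theorem oneSets_node (j : Fin n) (t0 t1 : BTree n) :
    oneSets (.node j t0 t1) = oneSets t0 ++ (oneSets t1).map (insert j) := by
  simp [oneSets, leavesJ_node, Function.comp_def]

theorem skew_of_le {k c : ℕ} (h : k ≤ c) (l : List (Fin n)) : skew k l c = .leaf := by
  cases l <;> simp [skew, h.not_gt]

theorem skew_cons_of_lt {k c : ℕ} (h : c < k) (j : Fin n) (l : List (Fin n)) :
    skew k (j :: l) c = .node j (skew k l c) (skew k l (c + 1)) := by
  simp [skew, h]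

theorem notMem_of_mem_oneSets_skew {l : List (Fin n)} {i : Fin n} (hi : i ∉ l) {k c : ℕ}
    {J : Finset (Fin n)} (hJ : J ∈ oneSets (skew k l c)) : i ∉ J := by
  induction l generalizing c J with
  | nil =>
    obtain rfl := List.mem_singleton.1 hJ
    exact Finset.notMem_empty i
  | cons j l ih =>
    obtain ⟨hij, hil⟩ := not_or.1 (mt List.mem_cons.2 hi)
    rcases lt_or_ge c k with hck | hkc
    · rw [skew_cons_of_lt hck, oneSets_node, List.mem_append, List.mem_map] at hJ
      rcases hJ with hJ | ⟨K, hK, rfl⟩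
      · exact ih hil hJ
      · exact Finset.mem_insert.not.2 (not_or.2 ⟨hij, ih hil hK⟩)
    · rw [skew_of_le hkc, oneSets_leaf] at hJ
      obtain rfl := List.mem_singleton.1 hJ
      exact Finset.notMem_empty i

-- For `k < c` the truncated difference `k - c` is the intended bound `0`: the tree is one leaf.
theorem mem_oneSets_skew {l : List (Fin n)} (hl : l.Nodup) {k c : ℕ} {J : Finset (Fin n)} :
    J ∈ oneSets (skew k l c) ↔ J ⊆ l.toFinset ∧ J.card ≤ k - c := by
  induction l generalizing c J with
  | nil => simp +contextual [skew, oneSets_leaf]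
  | cons j l ih =>
    obtain ⟨hj, hl⟩ := List.nodup_cons.1 hl
    rcases lt_or_ge c k with hck | hkc
    · have hbudget : k - c = k - (c + 1) + 1 := by omega
      simp only [skew_cons_of_lt hck, oneSets_node, List.mem_append, List.mem_map, ih hl,
        List.toFinset_cons, hbudget]
      exact (subset_insert_and_card_le_succ_iff (mt List.mem_toFinset.1 hj)).symm
    · simp +contextual [skew_of_le hkc, oneSets_leaf, Nat.sub_eq_zero_of_le hkc]

theorem nodup_oneSets_skew {l : List (Fin n)} (hl : l.Nodup) (k c : ℕ) :
    (oneSets (skew k l c)).Nodup := by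
  induction l generalizing c with
  | nil => exact List.nodup_singleton ∅
  | cons j l ih =>
    obtain ⟨hj, hl⟩ := List.nodup_cons.1 hl
    rcases lt_or_ge c k with hck | hkc
    · rw [skew_cons_of_lt hck, oneSets_node]
      have hinj : ∀ J ∈ oneSets (skew k l (c + 1)), ∀ K ∈ oneSets (skew k l (c + 1)),
          insert j J = insert j K → J = K := fun J hJ K hK h => by
        rw [← Finset.erase_insert (notMem_of_mem_oneSets_skew hj hJ), h,
          Finset.erase_insert (notMem_of_mem_oneSets_skew hj hK)]
      refine (ih hl c).append ((ih hl (c + 1)).map_on hinj) fun J hJ0 hJ1 => ?_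
      obtain ⟨K, -, rfl⟩ := List.mem_map.1 hJ1
      exact notMem_of_mem_oneSets_skew hj hJ0 (Finset.mem_insert_self j K)
    · rw [skew_of_le hkc, oneSets_leaf]
      exact List.nodup_singleton ∅

theorem le_add_card_or_union_eq_of_mem_leavesJ_skew {l : List (Fin n)} (hl : l.Nodup) {k c : ℕ}
    {p : Finset (Fin n) × Finset (Fin n)} (hp : p ∈ leavesJ (skew k l c) ∅ ∅) :
    k ≤ c + p.2.card ∨ p.1 ∪ p.2 = l.toFinset := by
  induction l generalizing c p with
  | nil =>
    obtain rfl := List.mem_singleton.1 hp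
    exact .inr (Finset.union_empty ∅)
  | cons j l ih =>
    obtain ⟨hj, hl⟩ := List.nodup_cons.1 hl
    rcases lt_or_ge c k with hck | hkc
    · rw [skew_cons_of_lt hck, leavesJ_node, List.mem_append, List.mem_map, List.mem_map] at hp
      rw [List.toFinset_cons]
      rcases hp with ⟨q, hq, rfl⟩ | ⟨q, hq, rfl⟩
      · refine (ih hl hq).imp_right fun hunion => ?_
        rw [Finset.insert_union, hunion]
      · have hjq : j ∉ q.2 := notMem_of_mem_oneSets_skew hj (List.mem_map_of_mem hq)
        refine (ih hl hq).imp (fun hcard => ?_) fun hunion => ?_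
        · rw [Finset.card_insert_of_notMem hjq]
          omega
        · rw [Finset.union_insert, hunion]
    · exact .inl (hkc.trans (Nat.le_add_right c _))

theorem length_leavesJ_skew {l : List (Fin n)} (hl : l.Nodup) (k c : ℕ) :
    (leavesJ (skew k l c) ∅ ∅).length =
      ∑ i ∈ Finset.range (k - c + 1), l.length.choose i := by
  have hsets : (oneSets (skew k l c)).toFinset =
      l.toFinset.powerset.filter (·.card ≤ k - c) := by
    ext J
    simp only [List.mem_toFinset, mem_oneSets_skew hl, Finset.mem_filter, Finset.mem_powerset]
  calc (leavesJ (skew k l c) ∅ ∅).length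
      = (oneSets (skew k l c)).length := (List.length_map Prod.snd).symm
    _ = (oneSets (skew k l c)).toFinset.card :=
        (List.toFinset_card_of_nodup (nodup_oneSets_skew hl k c)).symm
    _ = ∑ i ∈ Finset.range (k - c + 1), l.length.choose i := by
        rw [hsets, card_filter_powerset_card_le, List.toFinset_card_of_nodup hl]

theorem stmt6_general {l : List (Fin n)} (hl : l.Nodup) (k : ℕ) :
    ((leavesJ (skew k l 0) ∅ ∅).map Prod.snd).Nodup ∧
    (∀ J : Finset (Fin n),
      J ∈ (leavesJ (skew k l 0) ∅ ∅).map Prod.snd ↔ J ⊆ l.toFinset ∧ J.card ≤ k) ∧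
    (leavesJ (skew k l 0) ∅ ∅).length = ∑ i ∈ Finset.range (k + 1), l.length.choose i ∧
    ∀ p ∈ leavesJ (skew k l 0) ∅ ∅, p.2.card = k ∨ p.1 ∪ p.2 = l.toFinset := by
  refine ⟨nodup_oneSets_skew hl k 0, fun J => mem_oneSets_skew hl, length_leavesJ_skew hl k 0,
    fun p hp => ?_⟩
  have hcard : p.2.card ≤ k := ((mem_oneSets_skew hl).1 (List.mem_map_of_mem hp)).2
  refine (le_add_card_or_union_eq_of_mem_leavesJ_skew hl hp).imp_left fun hle => ?_
  exact hcard.antisymm (by rwa [Nat.zero_add] at hle)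

end SkewedTree

theorem stmt6 (n k : ℕ) (hn : 1 ≤ n) (hk1 : 1 ≤ k) (hkn : k ≤ n) (π : Equiv.Perm (Fin n)) :
    -- (i) `v ↦ J¹_v` is a bijection from the leaves onto `{J : |J| ≤ k}` ...
    ((leavesJ (skewTree n k π) ∅ ∅).map Prod.snd).Nodup ∧
    (∀ J : Finset (Fin n),
      J ∈ (leavesJ (skewTree n k π) ∅ ∅).map Prod.snd ↔ J.card ≤ k) ∧
    -- ... in particular the number of leaves is `∑_{i=0}^{k} C(n,i)` ...
    (leavesJ (skewTree n k π) ∅ ∅).length = ∑ i ∈ Finset.range (k + 1), Nat.choose n i ∧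
    -- (ii) every leaf satisfies `|J¹_v| = k` or `J⁰_v ∪ J¹_v = [n]`.
    ∀ p ∈ leavesJ (skewTree n k π) ∅ ∅, p.2.card = k ∨ p.1 ∪ p.2 = Finset.univ := by
  have huniv : ((List.finRange n).map π).toFinset = Finset.univ := by ext j; simp [π.surjective j]
  simpa only [skewTree, huniv, Finset.subset_univ, true_and, List.length_map,
    List.length_finRange] using stmt6_general ((List.nodup_finRange n).map π.injective) k
end

section
/- Let n ≥ 1, let k ∈ {1,…,n}, let ε ∈ (0,1), and let P ⊆ [0,1]^n be a set such that ∑_{i=1}^{n} x_i ≤ k − ε for every x ∈ P. Then for every permutation π of {1,…,n}, 𝒯^{π,k}(P) = P_I. -/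
open Set

/-- The atom of a leaf `p = (J⁰, J¹)`. -/
def atom (n : ℕ) (P : Set (Fin n → ℝ)) (p : Finset (Fin n) × Finset (Fin n)) :
    Set (Fin n → ℝ) :=
  P ∩ {x | (∀ j ∈ p.1, x j = 0) ∧ ∀ j ∈ p.2, x j = 1}

/-- `𝒯(P)`: the convex hull of the union of the atoms of the leaves of `𝒯`. -/
def treeSet (n : ℕ) (T : BTree n) (P : Set (Fin n → ℝ)) : Set (Fin n → ℝ) :=
  convexHull ℝ (⋃ p ∈ leavesJ T ∅ ∅, atom n P p)

/-!
Branching on `j` loses no point with `x j ∈ {0, 1}`, so for any tree every `0/1` point of `P` lies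
in some leaf atom; hence `𝒯(P) = P_I` as soon as every atom consists of `0/1` points.
A branch of the skewed tree ends either because every index is fixed, which leaves only `0/1`
points, or because `k` indices are fixed to `1`, and then the atom is empty since `∑ i, x i < k`
on `P`.
-/

section Tree

variable {n : ℕ} {P : Set (Fin n → ℝ)}

theorem atom_empty : atom n P (∅, ∅) = P := by
  simp [atom]

theorem atom_insert_union_atom_insert_inter_corners (j : Fin n) (J0 J1 : Finset (Fin n)) :
    (atom n P (insert j J0, J1) ∪ atom n P (J0, insert j J1)) ∩ corners n =
      atom n P (J0, J1) ∩ corners n := by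
  ext x
  simp only [atom, Finset.forall_mem_insert, mem_inter_iff, mem_union, mem_ofPred_eq]
  refine and_congr_left fun hx => ?_
  have hj : x j = 0 ∨ x j = 1 := hx j
  tauto

theorem iUnion_atom_leavesJ_inter_corners (T : BTree n) (J0 J1 : Finset (Fin n)) :
    (⋃ p ∈ leavesJ T J0 J1, atom n P p) ∩ corners n = atom n P (J0, J1) ∩ corners n := by
  induction T generalizing J0 J1 with
  | leaf => simp [leavesJ]
  | node j t0 t1 ih0 ih1 =>
    simp only [leavesJ, List.mem_append, iUnion_or, iUnion_union_distrib]
    rw [union_inter_distrib_right, ih0, ih1, ← union_inter_distrib_right,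
      atom_insert_union_atom_insert_inter_corners]

theorem treeSet_eq_integerHull {T : BTree n}
    (hT : ∀ p ∈ leavesJ T ∅ ∅, atom n P p ⊆ corners n) : treeSet n T P = integerHull n P := by
  rw [treeSet, integerHull, ← inter_eq_left.2 (iUnion₂_subset hT),
    iUnion_atom_leavesJ_inter_corners, atom_empty]

end Tree

section Atom

variable {n : ℕ} {P : Set (Fin n → ℝ)} {p : Finset (Fin n) × Finset (Fin n)}

theorem atom_subset_corners (hp : p.1 ∪ p.2 = Finset.univ) : atom n P p ⊆ corners n := by
  rintro x ⟨-, h0, h1⟩ i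
  have hi : i ∈ p.1 ∪ p.2 := hp ▸ Finset.mem_univ i
  exact (Finset.mem_union.1 hi).imp (h0 i) (h1 i)

theorem card_le_sum_of_mem_atom {x : Fin n → ℝ} (hx : x ∈ atom n P p) (hx0 : 0 ≤ x) :
    (p.2.card : ℝ) ≤ ∑ i, x i :=
  calc (p.2.card : ℝ) = ∑ i ∈ p.2, x i := by simp [Finset.sum_congr rfl hx.2.2]
    _ ≤ ∑ i, x i := Finset.sum_le_univ_sum_of_nonneg hx0

end Atom

section Skew

variable {n k : ℕ} {p : Finset (Fin n) × Finset (Fin n)}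

theorem union_eq_or_le_card_of_mem_leavesJ_skew {l : List (Fin n)} {J0 J1 : Finset (Fin n)}
    (hl : l.Nodup) (hlJ1 : ∀ j ∈ l, j ∉ J1) (hp : p ∈ leavesJ (skew k l J1.card) J0 J1) :
    p.1 ∪ p.2 = l.toFinset ∪ (J0 ∪ J1) ∨ k ≤ p.2.card := by
  induction l generalizing J0 J1 with
  | nil =>
    obtain rfl : p = (J0, J1) := by simpa only [skew, leavesJ, List.mem_singleton] using hp
    simp
  | cons a l ih =>
    obtain ⟨hal, hl⟩ := List.nodup_cons.1 hl
    obtain ⟨haJ1, hlJ1⟩ := List.forall_mem_cons.1 hlJ1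
    by_cases hk : J1.card < k
    · simp only [skew, if_pos hk, leavesJ, List.mem_append] at hp
      rcases hp with hp | hp
      · simpa using ih hl hlJ1 hp
      · have hlJ1' : ∀ j ∈ l, j ∉ insert a J1 := fun j hj =>
          Finset.mem_insert.not.2 (not_or.2 ⟨ne_of_mem_of_not_mem hj hal, hlJ1 j hj⟩)
        rw [← Finset.card_insert_of_notMem haJ1] at hp
        simpa using ih hl hlJ1' hp
    · obtain rfl : p = (J0, J1) := by
        simpa only [skew, if_neg hk, leavesJ, List.mem_singleton] using hp
      exact Or.inr (not_lt.1 hk)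

theorem union_eq_univ_or_le_card_of_mem_leavesJ_skewTree {π : Equiv.Perm (Fin n)}
    (hp : p ∈ leavesJ (skewTree n k π) ∅ ∅) : p.1 ∪ p.2 = Finset.univ ∨ k ≤ p.2.card := by
  have hnodup : ((List.finRange n).map π).Nodup := (List.nodup_finRange n).map π.injective
  have huniv : ((List.finRange n).map π).toFinset = Finset.univ := by
    ext i
    simpa using π.surjective i
  simpa [huniv] using
    union_eq_or_le_card_of_mem_leavesJ_skew (J0 := ∅) (J1 := ∅) hnodup (by simp) hp

end Skew

theorem stmt7_general {n k : ℕ} {P : Set (Fin n → ℝ)} (hP0 : ∀ x ∈ P, 0 ≤ x)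
    (hPk : ∀ x ∈ P, ∑ i, x i < k) (π : Equiv.Perm (Fin n)) :
    treeSet n (skewTree n k π) P = integerHull n P := by
  refine treeSet_eq_integerHull fun p hp => ?_
  rcases union_eq_univ_or_le_card_of_mem_leavesJ_skewTree hp with huniv | hcard
  · exact atom_subset_corners huniv
  · intro x hx
    have hk : (k : ℝ) ≤ ∑ i, x i :=
      (Nat.cast_le.2 hcard).trans (card_le_sum_of_mem_atom hx (hP0 x hx.1))
    exact absurd (hPk x hx.1) hk.not_gt

theorem stmt7 (n k : ℕ) (hn : 1 ≤ n) (hk1 : 1 ≤ k) (hkn : k ≤ n) (ε : ℝ)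
    (hε : 0 < ε ∧ ε < 1) (P : Set (Fin n → ℝ)) (hPcube : P ⊆ cube n)
    (hknap : ∀ x ∈ P, ∑ i, x i ≤ (k : ℝ) - ε) (π : Equiv.Perm (Fin n)) :
    treeSet n (skewTree n k π) P = integerHull n P :=
  stmt7_general (fun _ hx i => (hPcube hx i).1)
    (fun x hx => (hknap x hx).trans_lt (sub_lt_self _ hε.1)) π
end

section
/- Let G be a simple graph on vertex set {1,…,n} (n ≥ 1) with clique number k, let P_G be its fractional clique polytope, and let J ⊆ {1,…,n} with |J| = k. If J is not a clique of G, then P_G ∩ {x : x_v = 1 for all v ∈ J} = ∅. If J is a clique of G, then P_G ∩ {x : x_v = 1 for all v ∈ J} = {χ_J}, where χ_J is the 0/1 indicator vector of J. -/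
open Set

/-- The fractional clique polytope of a graph `G` on vertex set `Fin n`. -/
def fracClique (n : ℕ) (G : SimpleGraph (Fin n)) : Set (Fin n → ℝ) :=
  {x | (∀ v, 0 ≤ x v) ∧ ∀ u v : Fin n, u ≠ v → ¬ G.Adj u v → x u + x v ≤ 1}

section FractionalCliquePolytope

variable {V R : Type*} [Semiring R] [PartialOrder R] {G : SimpleGraph V} {J : Set V}

variable (R G) in
/-- The fractional clique polytope of a graph on an arbitrary vertex type, with coordinates in an
arbitrary partially ordered semiring; `fracClique` is the case `V = Fin n`, `R = ℝ`. -/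
def fractionalCliquePolytope : Set (V → R) :=
  {x | (∀ v, 0 ≤ x v) ∧ ∀ u v, u ≠ v → ¬ G.Adj u v → x u + x v ≤ 1}

theorem exists_not_adj_of_maximal_isClique (hJ : Maximal G.IsClique J) {v : V} (hv : v ∉ J) :
    ∃ u ∈ J, ¬ G.Adj v u := by
  by_contra! hadj
  exact hv (hJ.mem_of_prop_insert (hJ.prop.insert fun u hu _ => hadj u hu))

variable [IsStrictOrderedRing R] {x : V → R}

theorem eq_zero_of_mem_fractionalCliquePolytope (hx : x ∈ fractionalCliquePolytope R G)
    {u v : V} (hne : v ≠ u) (hadj : ¬ G.Adj v u) (hu : x u = 1) : x v = 0 := by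
  have hsum : x v + 1 ≤ 1 := hu ▸ hx.2 v u hne hadj
  exact (add_le_iff_nonpos_left.mp hsum).antisymm (hx.1 v)

theorem isClique_of_mem_fractionalCliquePolytope (hx : x ∈ fractionalCliquePolytope R G)
    (hxJ : ∀ v ∈ J, x v = 1) : G.IsClique J := by
  intro u hu v hv hne
  by_contra hadj
  have hxu : x u = 0 := eq_zero_of_mem_fractionalCliquePolytope hx hne hadj (hxJ v hv)
  exact one_ne_zero ((hxJ u hu).symm.trans hxu)

theorem eq_indicator_of_mem_fractionalCliquePolytope (hJ : Maximal G.IsClique J)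
    (hx : x ∈ fractionalCliquePolytope R G) (hxJ : ∀ v ∈ J, x v = 1) : x = J.indicator 1 := by
  funext v
  by_cases hv : v ∈ J
  · exact (hxJ v hv).trans (indicator_of_mem hv 1).symm
  · obtain ⟨u, hu, hadj⟩ := exists_not_adj_of_maximal_isClique hJ hv
    have hne : v ≠ u := (ne_of_mem_of_not_mem hu hv).symm
    rw [indicator_of_notMem hv]
    exact eq_zero_of_mem_fractionalCliquePolytope hx hne hadj (hxJ u hu)

theorem indicator_mem_fractionalCliquePolytope (hJ : G.IsClique J) :
    J.indicator 1 ∈ fractionalCliquePolytope R G := by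
  refine ⟨indicator_nonneg fun _ _ => zero_le_one, fun u v hne hadj => ?_⟩
  have hle (w : V) : J.indicator (1 : V → R) w ≤ 1 :=
    indicator_le_self' (fun _ _ => zero_le_one) w
  by_cases hu : u ∈ J
  · have hv : v ∉ J := fun hv => hadj (hJ hu hv hne)
    simpa only [indicator_of_notMem hv, add_zero] using hle u
  · simpa only [indicator_of_notMem hu, zero_add] using hle v

end FractionalCliquePolytope

theorem indicator_one_coe_finset {α M : Type*} [DecidableEq α] [Zero M] [One M] (s : Finset α) :
    (s : Set α).indicator (1 : α → M) = fun a => if a ∈ s then 1 else 0 := by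
  ext a
  simp only [indicator_apply, Finset.mem_coe, Pi.one_apply]

theorem stmt8_general (R : Type*) [Semiring R] [PartialOrder R] [IsStrictOrderedRing R]
    {V : Type*} (G : SimpleGraph V) (J : Set V) :
    (¬ G.IsClique J → fractionalCliquePolytope R G ∩ {x | ∀ v ∈ J, x v = 1} = ∅) ∧
    (Maximal G.IsClique J →
      fractionalCliquePolytope R G ∩ {x | ∀ v ∈ J, x v = 1} = {J.indicator 1}) := by
  refine ⟨fun hJ => ?_, fun hJ => ?_⟩
  · exact eq_empty_of_forall_notMem fun x hx =>
      hJ (isClique_of_mem_fractionalCliquePolytope hx.1 hx.2)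
  · refine eq_singleton_iff_unique_mem.mpr ⟨⟨?_, ?_⟩, fun x hx => ?_⟩
    · exact indicator_mem_fractionalCliquePolytope hJ.prop
    · exact fun v hv => indicator_of_mem hv 1
    · exact eq_indicator_of_mem_fractionalCliquePolytope hJ hx.1 hx.2

theorem stmt8 (n k : ℕ) (hn : 1 ≤ n) (G : SimpleGraph (Fin n))
    -- `k` is the clique number of `G`
    (hk_ex : ∃ K : Finset (Fin n), G.IsNClique k K)
    (hk_max : ∀ K : Finset (Fin n), G.IsClique (K : Set (Fin n)) → K.card ≤ k)
    (J : Finset (Fin n)) (hJ : J.card = k) :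
    (¬ G.IsClique (J : Set (Fin n)) →
      fracClique n G ∩ {x | ∀ v ∈ J, x v = 1} = ∅) ∧
    (G.IsClique (J : Set (Fin n)) →
      fracClique n G ∩ {x | ∀ v ∈ J, x v = 1} =
        {fun v => if v ∈ J then (1 : ℝ) else 0}) := by
  rw [← indicator_one_coe_finset]
  exact (stmt8_general ℝ G (J : Set (Fin n))).imp_right fun hface hc => hface
    (SimpleGraph.IsMaximumClique.isMaximalClique J ⟨hc, fun K hK => hJ ▸ hk_max K hK⟩)
end

section
/- Let n ≥ 1, let S ⊆ {0,1}^n, and let P_S be the no-good polytope of S. Let J⁰, J¹ ⊆ {1,…,n} be disjoint and let F := {x ∈ [0,1]^n : x_j = 0 for all j ∈ J⁰ and x_j = 1 for all j ∈ J¹}. If F ∩ S = ∅, then F ⊆ P_S; in particular P_S ∩ F = F = conv(F ∩ {0,1}^n). -/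
open Set

/-- The no-good polytope of a set `S` of 0/1 points. -/
def noGood (n : ℕ) (S : Set (Fin n → ℝ)) : Set (Fin n → ℝ) :=
  {x ∈ cube n | ∀ s ∈ S,
    (1 : ℝ) / 2 ≤ ∑ j, (if s j = 0 then x j else 1 - x j)}

/-!
On the cube, the sum in the no-good inequality of a 0/1 point `s` is the `ℓ¹` distance to `s`. If
`s` lies off a face, then some coordinate is fixed by the face to a value other than `s j`, and this
coordinate alone puts every point of the face at distance at least `1` from `s`.

A face of the cube is a convex extreme subset, and the cube is the convex hull of its corners. An
open segment that meets an extreme set has its endpoints there, so points outside the face cannot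
contribute to a convex combination of corners that lies in it.
-/

section Extreme

variable {𝕜 : Type*} [Semiring 𝕜] [PartialOrder 𝕜]

theorem convexHull_inter_eq_of_isExtreme [ZeroLEOneClass 𝕜] {E : Type*} [AddCommMonoid E]
    [Module 𝕜 E] {A B : Set E} (hB : Convex 𝕜 B) (hAB : IsExtreme 𝕜 (convexHull 𝕜 A) B) :
    convexHull 𝕜 (B ∩ A) = B := by
  refine (convexHull_min inter_subset_left hB).antisymm fun x hxB ↦ ?_
  let C : Set E := {y ∈ convexHull 𝕜 A | y ∈ B → y ∈ convexHull 𝕜 (B ∩ A)}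
  have hAC : A ⊆ C := fun y hy ↦
    ⟨subset_convexHull 𝕜 A hy, fun hyB ↦ subset_convexHull 𝕜 _ ⟨hyB, hy⟩⟩
  have hC : Convex 𝕜 C := by
    rw [convex_iff_openSegment_subset]
    rintro y ⟨hyA, hy⟩ z ⟨hzA, hz⟩ w hw
    refine ⟨(convex_convexHull 𝕜 A).openSegment_subset hyA hzA hw, fun hwB ↦ ?_⟩
    have hyB : y ∈ B := hAB.left_mem_of_mem_openSegment hyA hzA hwB hw
    have hzB : z ∈ B := hAB.right_mem_of_mem_openSegment hyA hzA hwB hw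
    exact (convex_convexHull 𝕜 _).openSegment_subset (hy hyB) (hz hzB) hw
  exact (convexHull_min hAC hC (hAB.subset hxB)).2 hxB

theorem isExtreme_univ_pi_inter_pi {ι : Type*} {M : ι → Type*} [∀ i, AddCommMonoid (M i)]
    [∀ i, SMul 𝕜 (M i)] {s t : ∀ i, Set (M i)} {J : Set ι}
    (h : ∀ i ∈ J, IsExtreme 𝕜 (s i) (t i)) :
    IsExtreme 𝕜 (univ.pi s) (univ.pi s ∩ J.pi t) := by
  refine ⟨inter_subset_left, ?_⟩
  rintro x hx y hy _ ⟨-, hz⟩ ⟨a, b, ha, hb, hab, rfl⟩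
  exact ⟨hx, fun i hi ↦ (h i hi).left_mem_of_mem_openSegment (hx i trivial) (hy i trivial)
    (hz i hi) ⟨a, b, ha, hb, hab, rfl⟩⟩

end Extreme

section Cube

variable {n : ℕ}

theorem corners_subset_cube : corners n ⊆ cube n := by
  intro x hx i
  rcases hx i with h | h <;> simp [h]

theorem cube_eq_univ_pi_Icc : cube n = univ.pi fun _ ↦ Icc (0 : ℝ) 1 := by
  ext x
  simp only [cube, mem_ofPred_eq, mem_univ_pi, mem_Icc]

theorem convexHull_corners : convexHull ℝ (corners n) = cube n := by
  have corners_eq : corners n = univ.pi fun _ ↦ ({0, 1} : Set ℝ) := by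
    ext x
    simp only [corners, mem_ofPred_eq, mem_univ_pi, mem_insert_iff, mem_singleton_iff]
  rw [corners_eq, convexHull_pi, cube_eq_univ_pi_Icc, convexHull_pair, segment_eq_Icc zero_le_one]

/-- The face of the cube on which the coordinates in `J0` are `0` and those in `J1` are `1`; it is
empty when `J0` and `J1` intersect. -/
def cubeFace (J0 J1 : Finset (Fin n)) : Set (Fin n → ℝ) :=
  {x ∈ cube n | (∀ j ∈ J0, x j = 0) ∧ ∀ j ∈ J1, x j = 1}

theorem cubeFace_eq_inter (J0 J1 : Finset (Fin n)) :
    cubeFace J0 J1 = (cube n ∩ (J0 : Set (Fin n)).pi fun _ ↦ {0}) ∩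
      (cube n ∩ (J1 : Set (Fin n)).pi fun _ ↦ {1}) := by
  rw [← inter_inter_distrib_left]
  rfl

theorem convex_cubeFace (J0 J1 : Finset (Fin n)) : Convex ℝ (cubeFace J0 J1) := by
  have convex_cube_inter (J : Set (Fin n)) (v : ℝ) : Convex ℝ (cube n ∩ J.pi fun _ ↦ {v}) := by
    rw [← convexHull_corners]
    exact (convex_convexHull ℝ _).inter (convex_pi fun _ _ ↦ convex_singleton v)
  rw [cubeFace_eq_inter]
  exact (convex_cube_inter _ 0).inter (convex_cube_inter _ 1)

theorem isExtreme_cubeFace (J0 J1 : Finset (Fin n)) : IsExtreme ℝ (cube n) (cubeFace J0 J1) := by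
  have endpoint_isExtreme {v : ℝ} (hv : v ∈ ({0, 1} : Set ℝ)) : IsExtreme ℝ (Icc 0 1) {v} := by
    rwa [isExtreme_singleton, extremePoints_Icc zero_le_one]
  rw [cubeFace_eq_inter, cube_eq_univ_pi_Icc]
  exact (isExtreme_univ_pi_inter_pi fun _ _ ↦ endpoint_isExtreme (by simp)).inter
    (isExtreme_univ_pi_inter_pi fun _ _ ↦ endpoint_isExtreme (by simp))

theorem convexHull_cubeFace_inter_corners (J0 J1 : Finset (Fin n)) :
    convexHull ℝ (cubeFace J0 J1 ∩ corners n) = cubeFace J0 J1 :=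
  convexHull_inter_eq_of_isExtreme (convex_cubeFace J0 J1)
    (convexHull_corners ▸ isExtreme_cubeFace J0 J1)

theorem sum_noGood_eq_sum_abs_sub {x s : Fin n → ℝ} (hx : x ∈ cube n) (hs : s ∈ corners n) :
    ∑ j, (if s j = 0 then x j else 1 - x j) = ∑ j, |x j - s j| := by
  refine Finset.sum_congr rfl fun j _ ↦ ?_
  rcases hs j with h | h
  · rw [if_pos h, h, sub_zero, abs_of_nonneg (hx j).1]
  · rw [if_neg (h ▸ one_ne_zero), h, abs_sub_comm, abs_of_nonneg (sub_nonneg.2 (hx j).2)]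

theorem one_le_sum_abs_sub_of_mem_cubeFace {J0 J1 : Finset (Fin n)} {x s : Fin n → ℝ}
    (hx : x ∈ cubeFace J0 J1) (hs : s ∈ corners n) (hsF : s ∉ cubeFace J0 J1) :
    1 ≤ ∑ j, |x j - s j| := by
  obtain ⟨-, hx0, hx1⟩ := hx
  have disagree : ∃ j, |x j - s j| = 1 := by
    by_contra! agree
    refine hsF ⟨corners_subset_cube hs, fun j hj ↦ (hs j).resolve_right fun h ↦ agree j ?_,
      fun j hj ↦ (hs j).resolve_left fun h ↦ agree j ?_⟩
    · simp [hx0 j hj, h]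
    · simp [hx1 j hj, h]
  obtain ⟨j, hj⟩ := disagree
  calc 1 = |x j - s j| := hj.symm
    _ ≤ ∑ j, |x j - s j| :=
      Finset.single_le_sum (f := fun j ↦ |x j - s j|) (fun _ _ ↦ abs_nonneg _) (Finset.mem_univ j)

theorem cubeFace_subset_noGood {S : Set (Fin n → ℝ)} (hS : S ⊆ corners n)
    {J0 J1 : Finset (Fin n)} (hFS : Disjoint (cubeFace J0 J1) S) :
    cubeFace J0 J1 ⊆ noGood n S := by
  refine fun x hx ↦ ⟨hx.1, fun s hs ↦ ?_⟩
  rw [sum_noGood_eq_sum_abs_sub hx.1 (hS hs)]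
  have := one_le_sum_abs_sub_of_mem_cubeFace hx (hS hs) (hFS.notMem_of_mem_right hs)
  linarith

end Cube

theorem stmt10 (n : ℕ) (hn : 1 ≤ n) (S : Set (Fin n → ℝ)) (hS : S ⊆ corners n)
    (J0 J1 : Finset (Fin n)) (hdisj : Disjoint J0 J1)
    (F : Set (Fin n → ℝ))
    (hF : F = {x ∈ cube n | (∀ j ∈ J0, x j = 0) ∧ ∀ j ∈ J1, x j = 1})
    (hFS : F ∩ S = ∅) :
    F ⊆ noGood n S ∧ noGood n S ∩ F = F ∧ F = convexHull ℝ (F ∩ corners n) := by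
  obtain rfl : F = cubeFace J0 J1 := hF
  have hsub : cubeFace J0 J1 ⊆ noGood n S :=
    cubeFace_subset_noGood hS (disjoint_iff_inter_eq_empty.2 hFS)
  exact ⟨hsub, inter_eq_right.2 hsub, (convexHull_cubeFace_inter_corners J0 J1).symm⟩
end

section
/- For every m ≥ 1, L(Q_m) = ∅, where Q_m ⊆ [0,1]^{3m} is the fractional stable set polytope of m disjoint triangles intersected with the half-space ∑_v y_v ≥ m + 1/2. -/
open Set

/-- The `a`-th vertex of the `i`-th triangle, as an index in `Fin (3 * m)`. -/
def tidx (m : ℕ) (i : Fin m) (a : Fin 3) : Fin (3 * m) :=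
  ⟨3 * i.val + a.val, by have := i.isLt; have := a.isLt; omega⟩

/-- `Q_m`: the fractional stable set polytope of `m` disjoint triangles, intersected with the
half-space `∑ y_v ≥ m + 1/2`. -/
def Qm (m : ℕ) : Set (Fin (3 * m) → ℝ) :=
  {y | (∀ v, 0 ≤ y v ∧ y v ≤ 1) ∧
       (∀ i : Fin m,
          y (tidx m i 0) + y (tidx m i 1) ≤ 1 ∧
          y (tidx m i 0) + y (tidx m i 2) ≤ 1 ∧
          y (tidx m i 1) + y (tidx m i 2) ≤ 1) ∧
       (m : ℝ) + 1 / 2 ≤ ∑ v, y v}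

/-!
On an edge-constrained triangle, a point with one coordinate equal to `0` or `1` has coordinate sum
at most `1`: if the coordinate is `0`, the opposite edge gives the bound, and if it is `1`, the two
edges through it leave nothing for the other vertices. Being linear, this inequality passes to the
convex hull, so one round of lift-and-project enforces it on every triangle. Summing over the `m`
triangles gives `∑ v, y v ≤ m`, against the constraint `m + 1 / 2 ≤ ∑ v, y v`, which also passes to
the convex hull.
-/

theorem lop_subset_of_convex {n : ℕ} {P C : Set (Fin n → ℝ)} (hC : Convex ℝ C) (i : Fin n)
    (h : ∀ y ∈ P, y i = 0 ∨ y i = 1 → y ∈ C) : Lop n P ⊆ C := by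
  have hull_subset : convexHull ℝ ((P ∩ {y | y i = 0}) ∪ (P ∩ {y | y i = 1})) ⊆ C :=
    convexHull_min (union_subset (fun y hy ↦ h y hy.1 (.inl hy.2))
      fun y hy ↦ h y hy.1 (.inr hy.2)) hC
  exact (iInter_subset _ i).trans hull_subset

theorem add_add_le_one_of_eq_zero_or_eq_one {R : Type*} [CommRing R] [LinearOrder R]
    [IsStrictOrderedRing R] {a b c : R} (ha : a = 0 ∨ a = 1) (hab : a + b ≤ 1) (hac : a + c ≤ 1)
    (hbc : b + c ≤ 1) : a + b + c ≤ 1 := by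
  rcases ha with rfl | rfl <;> linarith

theorem triangle_le_one_of_mem_lop {n : ℕ} {P : Set (Fin n → ℝ)} {u v w : Fin n}
    (huv : ∀ y ∈ P, y u + y v ≤ 1) (huw : ∀ y ∈ P, y u + y w ≤ 1)
    (hvw : ∀ y ∈ P, y v + y w ≤ 1) {x : Fin n → ℝ} (hx : x ∈ Lop n P) :
    x u + x v + x w ≤ 1 := by
  let f : (Fin n → ℝ) →ₗ[ℝ] ℝ := .proj u + .proj v + .proj w
  have f_le_one : Lop n P ⊆ {y | f y ≤ 1} :=
    lop_subset_of_convex (convex_halfSpace_le f.isLinear 1) u fun y hy hyu ↦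
      add_add_le_one_of_eq_zero_or_eq_one hyu (huv y hy) (huw y hy) (hvw y hy)
  exact f_le_one hx

theorem le_map_of_mem_lop {n : ℕ} [NeZero n] {P : Set (Fin n → ℝ)} {f : (Fin n → ℝ) → ℝ}
    (hf : IsLinearMap ℝ f) {c : ℝ} (hP : ∀ y ∈ P, c ≤ f y) {x : Fin n → ℝ} (hx : x ∈ Lop n P) :
    c ≤ f x :=
  lop_subset_of_convex (convex_halfSpace_ge hf c) 0 (fun y hy _ ↦ hP y hy) hx

theorem isLinearMap_sum_apply (R : Type*) [Semiring R] (ι : Type*) [Fintype ι] :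
    IsLinearMap R fun y : ι → R ↦ ∑ v, y v :=
  ⟨fun _ _ ↦ Finset.sum_add_distrib, fun r _ ↦ (Finset.mul_sum _ _ r).symm⟩

theorem sum_eq_sum_tidx {M : Type*} [AddCommMonoid M] (m : ℕ) (y : Fin (3 * m) → M) :
    ∑ v, y v = ∑ i : Fin m, (y (tidx m i 0) + y (tidx m i 1) + y (tidx m i 2)) := by
  let e : Fin m × Fin 3 ≃ Fin (3 * m) := finProdFinEquiv.trans (finCongr (Nat.mul_comm m 3))
  have e_apply (i : Fin m) (a : Fin 3) : e (i, a) = tidx m i a :=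
    Fin.ext (Nat.add_comm a.val (3 * i.val))
  simp only [← e.sum_comp y, Fintype.sum_prod_type, e_apply, Fin.sum_univ_three]

/-- The edge relaxation of the stable set polytope of `m` disjoint triangles: the polyhedron cut out
by the edge inequalities alone, without the bounds `0 ≤ y v ≤ 1`. -/
def triangleEdgeRelaxation (m : ℕ) : Set (Fin (3 * m) → ℝ) :=
  {y | ∀ i : Fin m,
    y (tidx m i 0) + y (tidx m i 1) ≤ 1 ∧
    y (tidx m i 0) + y (tidx m i 2) ≤ 1 ∧
    y (tidx m i 1) + y (tidx m i 2) ≤ 1}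

theorem sum_le_of_mem_lop {m : ℕ} {P : Set (Fin (3 * m) → ℝ)}
    (hP : P ⊆ triangleEdgeRelaxation m) {x : Fin (3 * m) → ℝ} (hx : x ∈ Lop (3 * m) P) :
    ∑ v, x v ≤ m := by
  calc
    ∑ v, x v = ∑ i : Fin m, (x (tidx m i 0) + x (tidx m i 1) + x (tidx m i 2)) :=
      sum_eq_sum_tidx m x
    _ ≤ ∑ _i : Fin m, (1 : ℝ) := Finset.sum_le_sum fun i _ ↦
      triangle_le_one_of_mem_lop (fun y hy ↦ (hP hy i).1) (fun y hy ↦ (hP hy i).2.1)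
        (fun y hy ↦ (hP hy i).2.2) hx
    _ = m := by simp

theorem stmt12 (m : ℕ) (hm : 1 ≤ m) : Lop (3 * m) (Qm m) = ∅ := by
  have : NeZero (3 * m) := ⟨by omega⟩
  refine eq_empty_of_forall_notMem fun x hx ↦ ?_
  have upper : ∑ v, x v ≤ m := sum_le_of_mem_lop (fun y hy ↦ hy.2.1) hx
  have lower : (m : ℝ) + 1 / 2 ≤ ∑ v, x v :=
    le_map_of_mem_lop (isLinearMap_sum_apply ℝ _) (fun y hy ↦ hy.2.2) hx
  linarith
end

section
/- Let n ≥ 1, let P ⊆ [0,1]^n be a convex set, and let k ∈ {1,…,n}. Then T^k(P) ⊆ B^k(P). -/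
open Set

/-- `R_k(P)`: the family of branch-and-bound relaxations of `P` of height at most `k`. -/
def Rk (n : ℕ) : ℕ → Set (Fin n → ℝ) → Set (Set (Fin n → ℝ))
  | 0, P => {P}
  | k + 1, P => {P} ∪ {Q | ∃ j : Fin n, ∃ A ∈ Rk n k (P ∩ {x | x j = 0}),
      ∃ B ∈ Rk n k (P ∩ {x | x j = 1}), Q = convexHull ℝ (A ∪ B)}

/-- The height-`k` branch-and-bound operator `T^k`. -/
def Tk (n k : ℕ) (P : Set (Fin n → ℝ)) : Set (Fin n → ℝ) :=
  ⋂ Q ∈ Rk n k P, Q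

/-- The Balas–Ceria–Cornuéjols operator `B^k`. -/
def Bk (n k : ℕ) (P : Set (Fin n → ℝ)) : Set (Fin n → ℝ) :=
  ⋂ S ∈ {S : Finset (Fin n) | S.card = k},
    convexHull ℝ {x ∈ P | ∀ j ∈ S, x j = 0 ∨ x j = 1}

/-! Branching successively on the coordinates in `S` gives a relaxation of height `|S|` whose convex
hull is that of the points of `P` with 0/1 coordinates on `S`. Each set in the intersection
defining `B^k(P)` therefore contains a member of `R_k(P)`, and `T^k(P)` lies inside every such
member. -/

/-- The points of `P` whose coordinates in `S` are all `0` or `1`; `B^k(P)` intersects the convex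
hulls of these sets over `|S| = k`. -/
def integralOn {ι : Type*} (S : Finset ι) (P : Set (ι → ℝ)) : Set (ι → ℝ) :=
  {x ∈ P | ∀ j ∈ S, x j = 0 ∨ x j = 1}

section IntegralOn

variable {ι : Type*}

theorem integralOn_empty (P : Set (ι → ℝ)) : integralOn ∅ P = P := by
  simp [integralOn]

theorem integralOn_insert [DecidableEq ι] (i : ι) (S : Finset ι) (P : Set (ι → ℝ)) :
    integralOn (insert i S) P =
      integralOn S (P ∩ {x | x i = 0}) ∪ integralOn S (P ∩ {x | x i = 1}) := by
  ext x
  simp only [integralOn, Finset.forall_mem_insert, mem_union, mem_inter_iff, mem_ofPred_eq]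
  tauto

end IntegralOn

theorem convexHull_union_congr {𝕜 E : Type*} [Semiring 𝕜] [PartialOrder 𝕜] [AddCommMonoid E]
    [Module 𝕜 E] {s s' t t' : Set E} (hs : convexHull 𝕜 s = convexHull 𝕜 s')
    (ht : convexHull 𝕜 t = convexHull 𝕜 t') :
    convexHull 𝕜 (s ∪ t) = convexHull 𝕜 (s' ∪ t') := by
  rw [← convexHull_convexHull_union_left, hs, convexHull_convexHull_union_left,
    ← convexHull_convexHull_union_right, ht, convexHull_convexHull_union_right]

section BranchAndBound

variable {n k : ℕ} {P A B Q : Set (Fin n → ℝ)}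

theorem self_mem_Rk (k : ℕ) (P : Set (Fin n → ℝ)) : P ∈ Rk n k P := by
  cases k with
  | zero => exact mem_singleton P
  | succ k => exact Or.inl (mem_singleton P)

theorem convexHull_union_mem_Rk_succ {j : Fin n} (hA : A ∈ Rk n k (P ∩ {x | x j = 0}))
    (hB : B ∈ Rk n k (P ∩ {x | x j = 1})) : convexHull ℝ (A ∪ B) ∈ Rk n (k + 1) P :=
  Or.inr ⟨j, A, hA, B, hB, rfl⟩

theorem Tk_subset_of_mem_Rk (hQ : Q ∈ Rk n k P) : Tk n k P ⊆ Q :=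
  biInter_subset_of_mem hQ

theorem exists_mem_Rk_card_convexHull_eq (S : Finset (Fin n)) (P : Set (Fin n → ℝ)) :
    ∃ Q ∈ Rk n S.card P, convexHull ℝ Q = convexHull ℝ (integralOn S P) := by
  induction S using Finset.induction_on generalizing P with
  | empty => exact ⟨P, self_mem_Rk 0 P, by rw [integralOn_empty]⟩
  | insert i S hi ih =>
    obtain ⟨A, hA, hullA⟩ := ih (P ∩ {x | x i = 0})
    obtain ⟨B, hB, hullB⟩ := ih (P ∩ {x | x i = 1})
    refine ⟨convexHull ℝ (A ∪ B), ?_, ?_⟩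
    · rw [Finset.card_insert_of_notMem hi]
      exact convexHull_union_mem_Rk_succ hA hB
    · calc
        convexHull ℝ (convexHull ℝ (A ∪ B)) = convexHull ℝ (A ∪ B) :=
          (convexHull ℝ).idempotent _
        _ = convexHull ℝ
              (integralOn S (P ∩ {x | x i = 0}) ∪ integralOn S (P ∩ {x | x i = 1})) :=
          convexHull_union_congr hullA hullB
        _ = convexHull ℝ (integralOn (insert i S) P) := by rw [integralOn_insert]

theorem Tk_card_subset_convexHull_integralOn (S : Finset (Fin n)) (P : Set (Fin n → ℝ)) :
    Tk n S.card P ⊆ convexHull ℝ (integralOn S P) := by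
  obtain ⟨Q, hQ, hull_eq⟩ := exists_mem_Rk_card_convexHull_eq S P
  calc
    Tk n S.card P ⊆ Q := Tk_subset_of_mem_Rk hQ
    _ ⊆ convexHull ℝ Q := subset_convexHull ℝ Q
    _ = convexHull ℝ (integralOn S P) := hull_eq

end BranchAndBound

theorem stmt15_general (n k : ℕ) (P : Set (Fin n → ℝ)) : Tk n k P ⊆ Bk n k P := by
  refine subset_iInter₂ fun S hS => ?_
  obtain rfl : S.card = k := hS
  exact Tk_card_subset_convexHull_integralOn S P

theorem stmt15 (n : ℕ) (hn : 1 ≤ n) (P : Set (Fin n → ℝ)) (hPcube : P ⊆ cube n)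
    (hPconv : Convex ℝ P) (k : ℕ) (hk1 : 1 ≤ k) (hkn : k ≤ n) :
    Tk n k P ⊆ Bk n k P :=
  stmt15_general n k P
end
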